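/- Let p be an odd prime, n a positive integer, and let f ∈ F_{p^n}[X] be of the form f(X) = X^{p^k+1} + h(X) for some positive integer k, where the degree e of h satisfies e < p^k + 1. If f is exceptional planar, then p divides e or p divides e − 1. -/

import Mathlib

open Polynomial

/-- A function on a field of odd characteristic is planar if for every nonzero `ε`
the map `x ↦ f (x + ε) - f x` is a bijection. -/
def IsPlanarOdd {F : Type} [Field F] (f : F → F) : Prop :=
  ∀ ε : F, ε ≠ 0 → Function.Bijective (fun x : F => f (x + ε) - f x)

/-- A polynomial over a finite field `K` (of odd order) is exceptional planar if for
infinitely many positive integers `r` it induces a planar function on the extension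
of `K` of degree `r`. -/
def IsExceptionalPlanarOdd {K : Type} [Field K] [Fintype K] (f : K[X]) : Prop :=
  Set.Infinite {r : ℕ | 0 < r ∧ ∀ (L : Type) [Field L] [Fintype L] [Algebra K L],
      Fintype.card L = Fintype.card K ^ r →
      IsPlanarOdd (fun x : L => Polynomial.aeval x f)}

/- Write `M = p ^ k - 1`. The second difference of `f` in the directions `x` and `z` at the point
`y` is `x * z * E(x, y, z)` with `E = X ^ M + Z ^ M + H(X, Y, Z)` and `deg H ≤ e - 2`, so `f` fails
to be planar on an extension `L` as soon as the surface `E = 0` has an `L`-point with `x * z ≠ 0`.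
If `p` divides neither `e` nor `e - 1`, the monomial `Y ^ (e - 2)` occurs in `H` with a coefficient
`b ≠ 0`. For suitable weights the leading form of `E` is then `X ^ M + Z ^ M + b * Y ^ (e - 2)`,
which is irreducible by Eisenstein's criterion; hence `E` is absolutely irreducible.

That an absolutely irreducible hypersurface `E = 0` has, over every large extension, a point outside
a given `w = 0` would follow from the Lang-Weil bound. Here it comes instead from a trace formula:
up to sign, the sum in `L` of the values of `g` at the `L`-points of `E = 0` is the trace of the
operator `a ↦ C(E ^ (Q - 1) * g * a)`, where `C` is the Cartier operator of order `Q = |L|`.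
Absolute irreducibility makes it possible to choose a multiple `g` of `w` for which this operator
has, modulo `E`, rank one and nonzero trace. -/

section FrobeniusConstants

/-- Triviality of the field of Frobenius constants `⋂ r, Frac(A)^(q ^ r)`: it is reduced to `K`.
An element `s / t` of `Frac(A)` is a `q ^ r`-th power exactly when `α ^ (q ^ r) * s` equals
`β ^ (q ^ r) * t` for some `α ≠ 0` and `β` in `A`. -/
def HasTrivialFrobeniusConstants (K A : Type*) [CommRing A] [SMul K A] (q : ℕ) : Prop :=
  ∀ s t : A, t ≠ 0 → (∀ r, ∃ α β : A, α ≠ 0 ∧ α ^ q ^ r * s = β ^ q ^ r * t) → ∃ c : K, s = c • t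

theorem frobeniusAlgHom_pow_apply {K A : Type*} [Field K] [Fintype K] [CommRing A] [Algebra K A]
    (r : ℕ) (a : A) :
    (FiniteField.frobeniusAlgHom K A ^ r) a = a ^ Fintype.card K ^ r := by
  rw [AlgHom.coe_pow, FiniteField.coe_frobeniusAlgHom, pow_iterate]

variable {K A ι : Type*} [CommRing A] [IsDomain A]

theorem coeff_ne_zero_of_frobenius_relation [DecidableEq ι] {v : ι → A} {q r₀ : ℕ} {a : ι}
    {s : Finset ι} (ha : a ∉ s) (hq : q ≠ 0)
    (hs : ∀ α : ι → A, ∑ i ∈ s, α i ^ q ^ r₀ * v i = 0 → ∀ i ∈ s, α i = 0) (r : ℕ) {α : ι → A}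
    (hα : ∑ i ∈ insert a s, α i ^ q ^ (r + r₀) * v i = 0) (hne : ∃ i ∈ insert a s, α i ≠ 0) :
    α a ≠ 0 := by
  obtain ⟨i, hi, hαi⟩ := hne
  refine fun hαa => hαi ?_
  rw [Finset.sum_insert ha, hαa, zero_pow (pow_ne_zero _ hq), zero_mul, zero_add] at hα
  obtain rfl | hi := Finset.mem_insert.1 hi
  · exact hαa
  · refine eq_zero_of_pow_eq_zero (n := q ^ r) (hs (fun i => α i ^ q ^ r) ?_ i hi)
    simpa only [← pow_mul, ← pow_add] using hα

variable [Field K] [Fintype K] [Algebra K A]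

/- As in Artin's theorem on the independence of characters, two relations with a different power of
Frobenius combine to a shorter one, which forces the ratios of the coefficients into `K`. -/
theorem exists_frobenius_independent {v : ι → A} (hv : LinearIndependent K v)
    (hA : HasTrivialFrobeniusConstants K A (Fintype.card K)) (s : Finset ι) :
    ∃ r, ∀ α : ι → A, ∑ i ∈ s, α i ^ Fintype.card K ^ r * v i = 0 → ∀ i ∈ s, α i = 0 := by
  classical
  set q := Fintype.card K with hq
  induction s using Finset.induction_on with
  | empty => exact ⟨0, by simp⟩
  | insert a s ha ih =>
    obtain ⟨r₀, hr₀⟩ := ih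
    by_contra! hdep
    have relation (r : ℕ) : ∃ α : ι → A, α a ≠ 0 ∧
        α a ^ q ^ (r + r₀) * v a + ∑ i ∈ s, α i ^ q ^ (r + r₀) * v i = 0 := by
      obtain ⟨α, hα, hne⟩ := hdep (r + r₀)
      exact ⟨α, coeff_ne_zero_of_frobenius_relation ha Fintype.card_ne_zero hr₀ r hα hne,
        by rwa [Finset.sum_insert ha] at hα⟩
    obtain ⟨α, hαa, hα⟩ := relation 0
    rw [zero_add] at hα
    have ratio : ∀ i ∈ s, ∃ c : K, α i = c • α a := fun i hi => by
      refine hA _ _ hαa fun r => ?_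
      obtain ⟨β, hβa, hβ⟩ := relation r
      refine ⟨β a, β i, hβa, sub_eq_zero.1 ?_⟩
      refine hr₀ (fun i => β a ^ q ^ r * α i - β i ^ q ^ r * α a) ?_ i hi
      have expand_sub (i : ι) : (β a ^ q ^ r * α i - β i ^ q ^ r * α a) ^ q ^ r₀ * v i =
          β a ^ q ^ (r + r₀) * (α i ^ q ^ r₀ * v i) -
            α a ^ q ^ r₀ * (β i ^ q ^ (r + r₀) * v i) := by
        rw [hq, ← frobeniusAlgHom_pow_apply, map_sub, frobeniusAlgHom_pow_apply,
          frobeniusAlgHom_pow_apply]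
        ring
      simp only [expand_sub, Finset.sum_sub_distrib, ← Finset.mul_sum]
      linear_combination β a ^ q ^ (r + r₀) * hα - α a ^ q ^ r₀ * hβ
    choose! c hc using ratio
    have hv_rel : v a + ∑ i ∈ s, c i ^ q ^ r₀ • v i = 0 := by
      refine (mul_eq_zero.1 ?_).resolve_left (pow_ne_zero (q ^ r₀) hαa)
      rw [mul_add, Finset.mul_sum, ← hα]
      refine congrArg _ (Finset.sum_congr rfl fun i hi => ?_)
      rw [hc i hi, _root_.smul_pow, smul_mul_assoc, mul_smul_comm]
    refine hv.notMem_span_image (s := s) (x := a) ha ?_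
    rw [eq_neg_of_add_eq_zero_left hv_rel]
    exact neg_mem (sum_mem fun i hi =>
      Submodule.smul_mem _ _ (Submodule.subset_span (Set.mem_image_of_mem v hi)))

end FrobeniusConstants

section CartierLinear

/-- A nondegenerate `Q⁻¹`-linear operator on the ring `A`, of which Cartier operators are the
typical examples. -/
structure IsCartierLinear {R A : Type*} [Semiring R] [CommRing A] [Module R A]
    (Q : ℕ) (κ : Module.End R A) : Prop where
  map_pow_mul (a b : A) : κ (a ^ Q * b) = a * κ b
  exists_map_mul_ne_zero {b : A} (hb : b ≠ 0) : ∃ g, κ (g * b) ≠ 0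

namespace IsCartierLinear

section

variable {R A ι : Type*} [Semiring R] [CommRing A] [Module R A] {Q : ℕ}
  {κ : Module.End R A}

theorem pow (hκ : IsCartierLinear Q κ) (r : ℕ) : IsCartierLinear (Q ^ r) (κ ^ r) := by
  induction r with
  | zero => exact ⟨by simp, fun hb => ⟨1, by simpa using hb⟩⟩
  | succ r ih =>
    constructor
    · intro a b
      rw [pow_succ Q, pow_mul, pow_succ κ, Module.End.mul_apply,
        Module.End.mul_apply, hκ.map_pow_mul, ih.map_pow_mul]
    · intro b hb
      obtain ⟨g, hg⟩ := hκ.exists_map_mul_ne_zero hb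
      obtain ⟨g', hg'⟩ := ih.exists_map_mul_ne_zero hg
      refine ⟨g' ^ Q * g, ?_⟩
      rwa [pow_succ κ, Module.End.mul_apply, mul_assoc, hκ.map_pow_mul]

theorem ne_zero [Nontrivial A] (hκ : IsCartierLinear Q κ) : Q ≠ 0 := by
  rintro rfl
  obtain ⟨g, hg⟩ := hκ.exists_map_mul_ne_zero (one_ne_zero (α := A))
  exact hg (by simpa using hκ.map_pow_mul 0 (g * 1))

variable [IsDomain A]

/- For the pairing `(g, a) ↦ κ (g * a)`, the double annihilator of finitely many `v i` consists of
the elements that depend on them with coefficients in the `Q`-th powers. -/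
theorem exists_relation_of_annihilator (hκ : IsCartierLinear Q κ) (v : ι → A) (s : Finset ι)
    (a : A) (ha : ∀ g, (∀ i ∈ s, κ (g * v i) = 0) → κ (g * a) = 0) :
    ∃ (α : A) (β : ι → A), α ≠ 0 ∧ α ^ Q * a = ∑ i ∈ s, β i ^ Q * v i := by
  classical
  induction s using Finset.induction_on generalizing a with
  | empty =>
    refine ⟨1, 0, one_ne_zero, ?_⟩
    by_contra hne
    obtain ⟨g, hg⟩ := hκ.exists_map_mul_ne_zero (b := a) fun h => hne (by simp [h])
    exact hg (ha g (by simp))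
  | insert j s hj ih =>
    by_cases hs : ∃ g₀, (∀ i ∈ s, κ (g₀ * v i) = 0) ∧ κ (g₀ * v j) ≠ 0
    · obtain ⟨g₀, hg₀, hβ⟩ := hs
      set β₀ := κ (g₀ * v j)
      have combine (g b : A) : κ ((β₀ ^ Q * g - κ (g * v j) ^ Q * g₀) * b) =
          β₀ * κ (g * b) - κ (g * v j) * κ (g₀ * b) := by
        rw [sub_mul, map_sub, mul_assoc, mul_assoc, hκ.map_pow_mul, hκ.map_pow_mul]
      obtain ⟨α, β, hα, h⟩ := ih (β₀ ^ Q * a - κ (g₀ * a) ^ Q * v j) fun g hg => by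
        have := ha (β₀ ^ Q * g - κ (g * v j) ^ Q * g₀) fun i hi => by
          obtain rfl | hi := Finset.mem_insert.1 hi
          · rw [combine]; ring
          · rw [combine, hg i hi, hg₀ i hi, mul_zero, mul_zero, sub_zero]
        rw [combine] at this
        rw [mul_sub, mul_left_comm, mul_left_comm g, map_sub, hκ.map_pow_mul, hκ.map_pow_mul]
        linear_combination this
      refine ⟨α * β₀, Function.update β j (α * κ (g₀ * a)), mul_ne_zero hα hβ, ?_⟩
      rw [Finset.sum_insert hj, Function.update_self, Finset.sum_congr rfl fun i hi => by
        rw [Function.update_of_ne (ne_of_mem_of_not_mem hi hj)]]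
      linear_combination h
    · push Not at hs
      obtain ⟨α, β, hα, h⟩ := ih a fun g hg => ha g fun i hi =>
        (Finset.mem_insert.1 hi).elim (fun hij => hij ▸ hs g hg) (hg i)
      refine ⟨α, Function.update β j 0, hα, ?_⟩
      rw [Finset.sum_insert hj, Function.update_self, zero_pow hκ.ne_zero, zero_mul, zero_add, h]
      exact Finset.sum_congr rfl fun i hi => by
        rw [Function.update_of_ne (ne_of_mem_of_not_mem hi hj)]

end

variable {K A ι : Type*} [Field K] [Fintype K] [CommRing A] [IsDomain A] [Algebra K A]
  {κ : Module.End K A}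

theorem exists_dual_family [Finite ι] [DecidableEq ι] (hκ : IsCartierLinear (Fintype.card K) κ)
    (hA : HasTrivialFrobeniusConstants K A (Fintype.card K)) {v : ι → A}
    (hv : LinearIndependent K v) :
    ∃ (l : ℕ) (c : A) (g : ι → A), c ≠ 0 ∧ ∀ i j, (κ ^ l) (g i * v j) = if i = j then c else 0 := by
  have := Fintype.ofFinite ι
  obtain ⟨l, hl⟩ := exists_frobenius_independent hv hA Finset.univ
  have separate (i : ι) : ∃ g, (∀ j ∈ Finset.univ.erase i, (κ ^ l) (g * v j) = 0) ∧
      (κ ^ l) (g * v i) ≠ 0 := by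
    by_contra! h
    obtain ⟨α, β, hα, hrel⟩ := (hκ.pow l).exists_relation_of_annihilator v _ (v i) h
    refine hα (neg_eq_zero.1 ?_)
    have := hl (Function.update β i (-α)) ?_ i (Finset.mem_univ i)
    · rwa [Function.update_self] at this
    · rw [← Finset.add_sum_erase _ _ (Finset.mem_univ i), Function.update_self,
        ← frobeniusAlgHom_pow_apply, map_neg, frobeniusAlgHom_pow_apply, neg_mul, hrel,
        neg_add_eq_zero]
      exact Finset.sum_congr rfl fun j hj => by
        rw [Function.update_of_ne (Finset.ne_of_mem_erase hj)]
  choose g hg hgi using separate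
  set c := fun i => (κ ^ l) (g i * v i)
  refine ⟨l, ∏ i, c i,
    fun i => (∏ j ∈ Finset.univ.erase i, c j) ^ Fintype.card K ^ l * g i,
    Finset.prod_ne_zero_iff.2 fun i _ => hgi i, fun i j => ?_⟩
  rw [mul_assoc, (hκ.pow l).map_pow_mul]
  split_ifs with hij
  · rw [← hij, Finset.prod_erase_mul _ _ (Finset.mem_univ i)]
  · rw [hg i j (Finset.mem_erase.2 ⟨Ne.symm hij, Finset.mem_univ j⟩), mul_zero]

theorem exists_rank_one_family (hκ : IsCartierLinear (Fintype.card K) κ)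
    (hA : HasTrivialFrobeniusConstants K A (Fintype.card K)) (U : Submodule K A)
    [FiniteDimensional K U] :
    ∃ (l : ℕ) (c : A) (g : Fin (Module.finrank K U) → A)
      (ψ : Fin (Module.finrank K U) → A →ₗ[K] K), c ≠ 0 ∧
      (∀ i, ∀ a ∈ U, (κ ^ l) (g i * a) = ψ i a • c) ∧ ∀ a ∈ U, a ≠ 0 → ∃ i, ψ i a ≠ 0 := by
  set b := Module.finBasis K U
  obtain ⟨l, c, g, hc, hg⟩ := hκ.exists_dual_family hA
    (b.linearIndependent.map' U.subtype U.ker_subtype)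
  choose ψ hψ using fun i => (b.coord i).exists_extend
  replace hψ (i) (a : U) : ψ i a = b.repr a i := LinearMap.congr_fun (hψ i) a
  refine ⟨l, c, g, ψ, hc, fun i a ha => ?_, fun a ha ha0 => ?_⟩
  · lift a to U using ha
    nth_rw 1 [hψ, ← b.sum_repr a]
    simp only [Function.comp_apply, Submodule.subtype_apply] at hg
    simp only [Submodule.coe_sum, Submodule.coe_smul, Finset.mul_sum, mul_smul_comm, map_sum,
      map_smul, hg, smul_ite, smul_zero, Finset.sum_ite_eq, Finset.mem_univ, if_true]
  · lift a to U using ha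
    by_contra! h
    refine ha0 (congrArg Subtype.val (b.ext_elem (y := 0) fun i => ?_))
    rw [← hψ, h, map_zero, Finsupp.zero_apply]

theorem pow_add_map_pow_mul {R A : Type*} [Semiring R] [CommRing A] [Module R A] {Q : ℕ}
    {κ : Module.End R A} (hκ : IsCartierLinear Q κ) (m l : ℕ) (u x : A) :
    (κ ^ (m + l)) (u ^ Q ^ l * x) = (κ ^ m) (u * (κ ^ l) x) := by
  rw [pow_add, Module.End.mul_apply, (hκ.pow l).map_pow_mul]

end IsCartierLinear

end CartierLinear

section Cartier

open MvPolynomial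

variable {σ R : Type*} [Fintype σ] [CommSemiring R]

/-- The exponent `Q * v + (Q - 1)`; the monomials with such an exponent are those which the Cartier
operator does not kill. -/
noncomputable def topExponent (Q : ℕ) (v : σ →₀ ℕ) : σ →₀ ℕ :=
  Finsupp.equivFunOnFinite.symm fun i => Q * v i + (Q - 1)

@[simp]
theorem topExponent_apply (Q : ℕ) (v : σ →₀ ℕ) (i : σ) : topExponent Q v i = Q * v i + (Q - 1) :=
  rfl

theorem topExponent_injective {Q : ℕ} (hQ : Q ≠ 0) :
    Function.Injective (topExponent Q : (σ →₀ ℕ) → σ →₀ ℕ) := fun v w h => by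
  ext i
  simpa [hQ] using DFunLike.congr_fun h i

theorem topExponent_topExponent {Q Q' : ℕ} (hQ : Q ≠ 0) (hQ' : Q' ≠ 0) (v : σ →₀ ℕ) :
    topExponent Q' (topExponent Q v) = topExponent (Q * Q') v := by
  obtain ⟨a, rfl⟩ := Nat.exists_eq_succ_of_ne_zero hQ
  obtain ⟨b, rfl⟩ := Nat.exists_eq_succ_of_ne_zero hQ'
  ext i
  have : a.succ * b.succ - 1 = b.succ * a + b := by
    rw [Nat.sub_eq_iff_eq_add (Nat.mul_pos a.succ_pos b.succ_pos)]
    simp only [Nat.succ_eq_add_one]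
    ring
  simp only [topExponent_apply, this, Nat.succ_sub_one]
  ring

theorem degree_topExponent (Q : ℕ) (v : σ →₀ ℕ) :
    (topExponent Q v).degree = Q * v.degree + Fintype.card σ * (Q - 1) := by
  simp [Finsupp.degree_eq_sum, Finset.sum_add_distrib, Finset.mul_sum]

/-- The Cartier operator of order `Q`: it sends `X ^ (Q * v + (Q - 1))` to `X ^ v` and kills all
other monomials. -/
noncomputable def cartier (Q : ℕ) : MvPolynomial σ R →ₗ[R] MvPolynomial σ R :=
  (basisMonomials σ R).constr R (Function.extend (topExponent Q) (fun v => monomial v 1) 0)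

theorem coeff_cartier {Q : ℕ} (hQ : Q ≠ 0) (G : MvPolynomial σ R) (v : σ →₀ ℕ) :
    coeff v (cartier Q G) = coeff (topExponent Q v) G := by
  classical
  suffices lcoeff R v ∘ₗ cartier Q = lcoeff R (topExponent Q v) from LinearMap.congr_fun this G
  refine (basisMonomials σ R).ext fun m => ?_
  rw [LinearMap.comp_apply, cartier, Module.Basis.constr_basis, MvPolynomial.coe_basisMonomials,
    MvPolynomial.lcoeff_apply, MvPolynomial.lcoeff_apply, MvPolynomial.coeff_monomial]
  by_cases hm : ∃ w, topExponent Q w = m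
  · obtain ⟨w, rfl⟩ := hm
    rw [(topExponent_injective hQ).extend_apply, MvPolynomial.coeff_monomial]
    exact if_congr (topExponent_injective hQ).eq_iff.symm rfl rfl
  · rw [Function.extend_apply' _ _ _ hm, if_neg fun h => hm ⟨v, h.symm⟩, Pi.zero_apply,
      MvPolynomial.coeff_zero]

theorem cartier_cartier {Q Q' : ℕ} (hQ : Q ≠ 0) (hQ' : Q' ≠ 0) (G : MvPolynomial σ R) :
    cartier Q (cartier Q' G) = cartier (Q * Q') G := by
  ext v
  rw [coeff_cartier hQ, coeff_cartier hQ', coeff_cartier (mul_ne_zero hQ hQ'),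
    topExponent_topExponent hQ hQ']

theorem smul_le_topExponent_iff {Q : ℕ} (hQ : Q ≠ 0) (a v : σ →₀ ℕ) :
    Q • a ≤ topExponent Q v ↔ a ≤ v := by
  refine forall_congr' fun i => ?_
  simp only [Finsupp.smul_apply, smul_eq_mul, topExponent_apply]
  rw [← Nat.lt_succ_iff (m := a i), ← Nat.mul_lt_mul_left (Nat.pos_of_ne_zero hQ), Nat.mul_succ]
  omega

theorem cartier_expand_mul {Q : ℕ} (hQ : Q ≠ 0) (f g : MvPolynomial σ R) :
    cartier Q (expand Q f * g) = f * cartier Q g := by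
  classical
  induction f using MvPolynomial.induction_on' with
  | add f f' h h' => rw [map_add, add_mul, map_add, add_mul, h, h']
  | monomial a b =>
    ext v
    rw [MvPolynomial.expand_monomial, coeff_cartier hQ, coeff_monomial_mul', coeff_monomial_mul',
      coeff_cartier hQ]
    simp only [smul_le_topExponent_iff hQ]
    refine ite_congr rfl (fun hav => ?_) fun _ => rfl
    congr 2
    ext i
    have : Q * a i ≤ Q * v i := Nat.mul_le_mul_left _ (hav i)
    simp only [Finsupp.tsub_apply, Finsupp.smul_apply, smul_eq_mul, topExponent_apply, Nat.mul_sub]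
    omega

theorem totalDegree_cartier_le {Q : ℕ} (hQ : Q ≠ 0) {G : MvPolynomial σ R} {d : ℕ}
    (h : G.totalDegree < Q * (d + 1) + Fintype.card σ * (Q - 1)) :
    (cartier Q G).totalDegree ≤ d := by
  refine Finset.sup_le fun v hv => (?_ : v.degree ≤ d)
  rw [MvPolynomial.mem_support_iff, coeff_cartier hQ, ← MvPolynomial.mem_support_iff] at hv
  have hdeg : (topExponent Q v).degree ≤ G.totalDegree := le_totalDegree hv
  rw [degree_topExponent] at hdeg
  have : Q * v.degree < Q * (d + 1) := by omega
  exact Nat.lt_succ_iff.1 (Nat.lt_of_mul_lt_mul_left this)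

/-- The monomials whose exponents are all less than `Q` form a basis of the polynomial ring over the
image of `expand Q`. This is the one with exponent `u`. -/
noncomputable def reducedMonomial {Q : ℕ} (u : σ → Fin Q) : MvPolynomial σ R :=
  monomial (Finsupp.equivFunOnFinite.symm fun i => (u i : ℕ)) 1

theorem cartier_reducedMonomial_rev_mul {Q : ℕ} (hQ : Q ≠ 0) (u w : σ → Fin Q) :
    cartier Q (reducedMonomial (Fin.rev ∘ u) * reducedMonomial w : MvPolynomial σ R) =
      if u = w then 1 else 0 := by
  classical
  ext v
  rw [coeff_cartier hQ, reducedMonomial, reducedMonomial, monomial_mul, one_mul,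
    MvPolynomial.coeff_monomial]
  trans if u = w ∧ v = 0 then 1 else 0
  · refine if_congr ?_ rfl rfl
    have key (i : σ) : Q - (u i + 1) + w i = Q * v i + (Q - 1) ↔ u i = w i ∧ v i = 0 := by
      have hu := (u i).isLt
      have hw := (w i).isLt
      rw [Fin.ext_iff]
      rcases Nat.eq_zero_or_pos (v i) with hv | hv
      · rw [hv]; omega
      · have := Nat.mul_le_mul_left Q hv
        omega
    simp only [Finsupp.ext_iff, funext_iff, Finsupp.add_apply, topExponent_apply,
      Finsupp.equivFunOnFinite_symm_apply_apply, Function.comp_apply, Fin.val_rev, key,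
      forall_and, Finsupp.coe_zero, Pi.zero_apply]
  · split_ifs with h h' h' <;> simp_all [MvPolynomial.coeff_one, eq_comm]

theorem sum_reducedMonomial_mul_expand_cartier {Q : ℕ} [DecidableEq σ] (hQ : Q ≠ 0)
    (G : MvPolynomial σ R) :
    ∑ u : σ → Fin Q, reducedMonomial u *
      expand Q (cartier Q (reducedMonomial (Fin.rev ∘ u) * G)) = G := by
  induction G using MvPolynomial.induction_on' with
  | add f g hf hg =>
    simp only [mul_add, map_add, Finset.sum_add_distrib, hf, hg]
  | monomial m c =>
    set w : σ → Fin Q := fun i => ⟨m i % Q, Nat.mod_lt _ (Nat.pos_of_ne_zero hQ)⟩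
    have hm : monomial m c =
        expand Q (monomial (Finsupp.equivFunOnFinite.symm fun i => m i / Q) c) *
          reducedMonomial w := by
      rw [MvPolynomial.expand_monomial, reducedMonomial, monomial_mul, mul_one]
      refine congrArg (MvPolynomial.monomial · c) (Finsupp.ext fun i => ?_)
      exact (Nat.div_add_mod (m i) Q).symm
    have term (u : σ → Fin Q) :
        reducedMonomial u * expand Q (cartier Q (reducedMonomial (Fin.rev ∘ u) * monomial m c)) =
          if u = w then monomial m c else 0 := by
      rw [hm, mul_left_comm, cartier_expand_mul hQ, cartier_reducedMonomial_rev_mul hQ]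
      split_ifs with h
      · rw [h, mul_one, mul_comm]
      · rw [mul_zero, map_zero, mul_zero]
    simp only [term, Finset.sum_ite_eq', Finset.mem_univ, if_true]

theorem expand_card_pow {K τ : Type*} [Field K] [Fintype K] (r : ℕ) (f : MvPolynomial τ K) :
    expand (Fintype.card K ^ r) f = f ^ Fintype.card K ^ r := by
  rw [← frobeniusAlgHom_pow_apply]
  refine DFunLike.congr_fun (MvPolynomial.algHom_ext fun i => ?_) f
  rw [MvPolynomial.expand_X, frobeniusAlgHom_pow_apply]

variable {K : Type*} [Field K] [Fintype K]

theorem cartier_pow_mul (r : ℕ) (f g : MvPolynomial σ K) :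
    cartier (Fintype.card K ^ r) (f ^ Fintype.card K ^ r * g) =
      f * cartier (Fintype.card K ^ r) g := by
  rw [← expand_card_pow, cartier_expand_mul (pow_ne_zero _ Fintype.card_ne_zero)]

/- If every such image were divisible by `E`, reconstructing `E ^ (Q - 1) * s` from them would make
it divisible by `E ^ Q`. -/
theorem exists_not_dvd_cartier {E s : MvPolynomial σ K} (hE : E ≠ 0) (hs : ¬ E ∣ s) (r : ℕ) :
    ∃ u : MvPolynomial σ K, u.totalDegree ≤ Fintype.card σ * (Fintype.card K ^ r - 1) ∧
      ¬ E ∣ cartier (Fintype.card K ^ r) (E ^ (Fintype.card K ^ r - 1) * (u * s)) := by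
  classical
  have hQ : Fintype.card K ^ r ≠ 0 := pow_ne_zero _ Fintype.card_ne_zero
  have hexpand (f : MvPolynomial σ K) := expand_card_pow r f
  set Q := Fintype.card K ^ r
  by_contra! h
  refine hs ((mul_dvd_mul_iff_left (pow_ne_zero (Q - 1) hE)).1 ?_)
  rw [← pow_succ, Nat.sub_add_cancel (Nat.pos_of_ne_zero hQ),
    ← sum_reducedMonomial_mul_expand_cartier hQ (E ^ (Q - 1) * s)]
  refine Finset.dvd_sum fun u _ => Dvd.dvd.mul_left ?_ _
  rw [hexpand, mul_left_comm]
  refine pow_dvd_pow_of_dvd (h _ ?_) _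
  refine (totalDegree_monomial_le _ _).trans ?_
  refine (Finsupp.degree_eq_sum _).trans_le ?_
  refine (Finset.sum_le_card_nsmul _ _ (Q - 1) fun i _ => ?_).trans_eq (by simp)
  exact Nat.le_sub_one_of_lt (Fin.rev (u i)).isLt

end Cartier

section TraceFormula

open MvPolynomial

section TruncatedTrace

variable {σ R : Type*} [Finite σ] [CommSemiring R]

/-- The finite set of exponents of total degree at most `d`. -/
noncomputable def exponentsDegreeLE (σ : Type*) [Finite σ] (d : ℕ) : Finset (σ →₀ ℕ) :=
  (Finsupp.finite_of_degree_le d).toFinset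

@[simp]
theorem mem_exponentsDegreeLE {d : ℕ} {v : σ →₀ ℕ} : v ∈ exponentsDegreeLE σ d ↔ v.degree ≤ d :=
  Set.Finite.mem_toFinset _

theorem support_subset_exponentsDegreeLE {P : MvPolynomial σ R} {d : ℕ} (hP : P.totalDegree ≤ d) :
    P.support ⊆ exponentsDegreeLE σ d := fun _ hv =>
  mem_exponentsDegreeLE.2 ((le_totalDegree hv).trans hP)

/-- The trace of the compression of `T` to the polynomials of total degree at most `d`, computed in
the basis of monomials. -/
noncomputable def truncatedTrace (d : ℕ) (T : Module.End R (MvPolynomial σ R)) : R :=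
  ∑ v ∈ exponentsDegreeLE σ d, coeff v (T (monomial v 1))

theorem truncatedTrace_congr {d : ℕ} {T T' : Module.End R (MvPolynomial σ R)}
    (h : ∀ a, a.totalDegree ≤ d → T a = T' a) : truncatedTrace d T = truncatedTrace d T' :=
  Finset.sum_congr rfl fun v hv => by
    rw [h _ ((totalDegree_monomial_le v 1).trans (mem_exponentsDegreeLE.1 hv))]

theorem truncatedTrace_add (d : ℕ) (T T' : Module.End R (MvPolynomial σ R)) :
    truncatedTrace d (T + T') = truncatedTrace d T + truncatedTrace d T' := by
  simp only [truncatedTrace, LinearMap.add_apply, MvPolynomial.coeff_add, Finset.sum_add_distrib]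

theorem truncatedTrace_smulRight {d : ℕ} {s : MvPolynomial σ R} (hs : s.totalDegree ≤ d)
    (φ : MvPolynomial σ R →ₗ[R] R) : truncatedTrace d (φ.smulRight s) = φ s := by
  conv_rhs => rw [s.as_sum, map_sum]
  rw [truncatedTrace, ← Finset.sum_subset (support_subset_exponentsDegreeLE hs)]
  · refine Finset.sum_congr rfl fun v _ => ?_
    rw [LinearMap.smulRight_apply, MvPolynomial.coeff_smul, smul_eq_mul, mul_comm, ← smul_eq_mul,
      ← map_smul, MvPolynomial.smul_monomial, smul_eq_mul, mul_one]
  · intro v _ hv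
    rw [LinearMap.smulRight_apply, MvPolynomial.coeff_smul, notMem_support_iff.1 hv, smul_zero]

end TruncatedTrace

theorem sum_pow_eq_ite (L : Type*) [Field L] [Fintype L] {i : ℕ} (hi : i ≠ 0) :
    ∑ x : L, x ^ i = if Fintype.card L - 1 ∣ i then -1 else 0 := by
  classical
  rw [← FiniteField.sum_pow_units L i]
  refine Eq.trans ?_ (Finset.sum_map Finset.univ ⟨Units.val, Units.val_injective⟩
    fun x : L => x ^ i)
  refine (Finset.sum_subset (Finset.subset_univ _) fun x _ hx => ?_).symm
  by_contra hxi
  have hx0 : x ≠ 0 := fun h => hxi (by rw [h, zero_pow hi])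
  exact hx (Finset.mem_map.2 ⟨Units.mk0 x hx0, Finset.mem_univ _, rfl⟩)

variable {σ : Type*} [Fintype σ]

open Classical in
theorem sum_prod_pow_eq_ite [DecidableEq σ] (L : Type*) [Field L] [Fintype L] (m : σ →₀ ℕ) :
    ∑ z : σ → L, ∏ i, z i ^ m i =
      if ∃ v, m + v = topExponent (Fintype.card L) v then (-1) ^ Fintype.card σ else 0 := by
  obtain ⟨N, hN⟩ : ∃ N, Fintype.card L = N + 1 := ⟨_, (Nat.sub_add_cancel Fintype.card_pos).symm⟩
  have hN0 : N ≠ 0 := by have := Fintype.one_lt_card (α := L); omega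
  have solvable (k c : ℕ) :
      k + c = Fintype.card L * c + (Fintype.card L - 1) ↔ k = N * (c + 1) := by
    rw [hN, Nat.add_sub_cancel, add_mul, mul_add]; omega
  rw [← Fintype.piFinset_univ,
    ← Finset.prod_univ_sum (fun _ => Finset.univ) (fun i (t : L) => t ^ m i)]
  split_ifs with h
  · obtain ⟨v, hv⟩ := h
    refine (Finset.prod_eq_pow_card fun i _ => ?_).trans rfl
    have hmi : m i = N * (v i + 1) := (solvable _ _).1 (DFunLike.congr_fun hv i)
    rw [sum_pow_eq_ite L (by rw [hmi]; positivity), hN, Nat.add_sub_cancel, hmi,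
      if_pos (dvd_mul_right _ _)]
  · by_contra hne
    rw [← ne_eq, Finset.prod_ne_zero_iff] at hne
    have (i : σ) : ∃ c, m i = N * (c + 1) := by
      have hi := hne i (Finset.mem_univ i)
      have hmi : m i ≠ 0 := fun h => by simp [h] at hi
      rw [sum_pow_eq_ite L hmi, hN, Nat.add_sub_cancel, ite_ne_right_iff] at hi
      obtain ⟨c, hc⟩ := hi.1
      refine ⟨c - 1, ?_⟩
      rw [hc, Nat.sub_add_cancel (Nat.pos_of_ne_zero fun h => hmi (by rw [hc, h, mul_zero]))]
    choose c hc using this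
    exact h ⟨Finsupp.equivFunOnFinite.symm c, Finsupp.ext fun i => (solvable _ _).2 (hc i)⟩

/-- The operator `a ↦ cartier Q (G * a)`. -/
noncomputable def cartierMul {R : Type*} [CommSemiring R] (Q : ℕ) (G : MvPolynomial σ R) :
    Module.End R (MvPolynomial σ R) :=
  cartier Q ∘ₗ LinearMap.mulLeft R G

@[simp]
theorem cartierMul_apply {R : Type*} [CommSemiring R] (Q : ℕ) (G a : MvPolynomial σ R) :
    cartierMul Q G a = cartier Q (G * a) := rfl

open Classical in
theorem truncatedTrace_cartierMul_monomial {R : Type*} [CommSemiring R] {Q : ℕ} (hQ : 1 < Q)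
    {m : σ →₀ ℕ} {d : ℕ} (hm : m.degree < (Q - 1) * (d + 1 + Fintype.card σ)) (c : R) :
    truncatedTrace d (cartierMul Q (monomial m c)) =
      if ∃ v, m + v = topExponent Q v then c else 0 := by
  have term (v : σ →₀ ℕ) : coeff v (cartierMul Q (monomial m c) (monomial v 1)) =
      if m + v = topExponent Q v then c else 0 := by
    rw [cartierMul_apply, coeff_cartier (by omega), monomial_mul, mul_one,
      MvPolynomial.coeff_monomial]
  obtain ⟨N, rfl⟩ : ∃ N, Q = N + 1 := ⟨_, (Nat.sub_add_cancel hQ.le).symm⟩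
  rw [Nat.add_sub_cancel] at hm
  simp only [truncatedTrace, term]
  split_ifs with h
  · obtain ⟨v, hv⟩ := h
    rw [Finset.sum_eq_single_of_mem v, if_pos hv]
    · have hdeg := congrArg Finsupp.degree hv
      rw [map_add, degree_topExponent, Nat.add_sub_cancel] at hdeg
      have : N * (v.degree + Fintype.card σ) < N * (d + 1 + Fintype.card σ) := by
        linarith
      have := Nat.lt_of_mul_lt_mul_left this
      exact mem_exponentsDegreeLE.2 (by omega)
    · refine fun w _ hwv => if_neg fun hw => hwv (Finsupp.ext fun i => ?_)
      have hvi := DFunLike.congr_fun hv i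
      have hwi := DFunLike.congr_fun hw i
      simp only [Finsupp.add_apply, topExponent_apply, Nat.add_sub_cancel] at hvi hwi
      rw [Nat.succ_mul] at hvi hwi
      exact Nat.eq_of_mul_eq_mul_left (n := N) (by omega) (by omega)
  · exact Finset.sum_eq_zero fun v _ => if_neg fun hv => h ⟨v, hv⟩

theorem sum_aeval_eq_truncatedTrace [DecidableEq σ] {R L : Type*} [CommRing R] [Field L] [Fintype L]
    [Algebra R L] {G : MvPolynomial σ R} {d : ℕ}
    (hG : G.totalDegree < (Fintype.card L - 1) * (d + 1 + Fintype.card σ)) :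
    ∑ z : σ → L, MvPolynomial.aeval z G = algebraMap R L
      ((-1) ^ Fintype.card σ * truncatedTrace d (cartierMul (Fintype.card L) G)) := by
  classical
  have trace_sum : truncatedTrace d (cartierMul (Fintype.card L) G) =
      ∑ m ∈ G.support, truncatedTrace d (cartierMul (Fintype.card L) (monomial m (coeff m G))) := by
    simp only [truncatedTrace, cartierMul_apply]
    rw [Finset.sum_comm]
    refine Finset.sum_congr rfl fun v _ => ?_
    conv_lhs => rw [G.as_sum]
    rw [Finset.sum_mul, map_sum, MvPolynomial.coeff_sum]
  rw [trace_sum, Finset.mul_sum, map_sum]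
  simp only [MvPolynomial.aeval_def, eval₂_eq']
  rw [Finset.sum_comm]
  refine Finset.sum_congr rfl fun m hm => ?_
  rw [← Finset.mul_sum, sum_prod_pow_eq_ite,
    truncatedTrace_cartierMul_monomial Fintype.one_lt_card ((le_totalDegree hm).trans_lt hG)]
  split_ifs <;> simp [mul_comm]

theorem exists_functional_eq_smul_of_dvd {K τ : Type*} [Field K] {E : MvPolynomial τ K}
    (hE : E ≠ 0) :
    ∃ ρ : MvPolynomial τ K →ₗ[K] K, ∀ b, E ∣ b → b.totalDegree ≤ E.totalDegree → b = ρ b • E := by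
  obtain ⟨v, hv⟩ := MvPolynomial.ne_zero_iff.1 hE
  refine ⟨(coeff v E)⁻¹ • MvPolynomial.lcoeff K v, ?_⟩
  rintro _ ⟨b, rfl⟩ hdeg
  obtain ⟨c, rfl⟩ : ∃ c, b = MvPolynomial.C c := by
    rcases eq_or_ne b 0 with rfl | hb
    · exact ⟨0, MvPolynomial.C_0.symm⟩
    · rw [totalDegree_mul_of_isDomain hE hb] at hdeg
      exact ⟨_, totalDegree_eq_zero_iff_eq_C.1 (by omega)⟩
  rw [mul_comm, ← MvPolynomial.smul_eq_C_mul, LinearMap.smul_apply, MvPolynomial.lcoeff_apply,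
    MvPolynomial.coeff_smul, smul_eq_mul, smul_eq_mul, mul_comm c, inv_mul_cancel_left₀ hv]

theorem totalDegree_cartier_pow_mul_le {R : Type*} [CommSemiring R] {Q : ℕ} (hQ : Q ≠ 0)
    {E g : MvPolynomial σ R}
    (hg : g.totalDegree < E.totalDegree + Q + Fintype.card σ * (Q - 1)) :
    (cartier Q (E ^ (Q - 1) * g)).totalDegree ≤ E.totalDegree := by
  refine totalDegree_cartier_le hQ ?_
  have h₁ := totalDegree_mul (E ^ (Q - 1)) g
  have h₂ := totalDegree_pow E (Q - 1)
  have h₃ : Q * (E.totalDegree + 1) = (Q - 1) * E.totalDegree + E.totalDegree + Q := by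
    rw [mul_add_one, ← Nat.succ_mul, Nat.succ_eq_add_one,
      Nat.sub_add_cancel (Nat.pos_of_ne_zero hQ)]
  omega

theorem cartier_eq_C_truncatedTrace {R : Type*} [CommSemiring R] {Q : ℕ} (hQ : Q ≠ 0)
    {g : MvPolynomial σ R} (hg : g.totalDegree < (Fintype.card σ + 1) * (Q - 1)) :
    cartier Q g = MvPolynomial.C (truncatedTrace 0 (cartierMul Q g)) := by
  have hexp : exponentsDegreeLE σ 0 = {0} := by
    ext v
    rw [mem_exponentsDegreeLE, Nat.le_zero, Finsupp.degree_eq_zero_iff, Finset.mem_singleton]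
  have hdeg : (cartier Q g).totalDegree ≤ 0 :=
    totalDegree_cartier_le hQ (by rw [add_one_mul] at hg; omega)
  rw [truncatedTrace, hexp, Finset.sum_singleton, cartierMul_apply, monomial_zero',
    MvPolynomial.C_1, mul_one]
  exact totalDegree_eq_zero_iff_eq_C.1 (Nat.le_zero.1 hdeg)

theorem sum_aeval_filter_zeros {K L : Type*} [Field K] [Field L] [Fintype L] [DecidableEq σ]
    [DecidableEq L] [Algebra K L] (E g : MvPolynomial σ K) :
    ∑ z : σ → L with MvPolynomial.aeval z E = 0, MvPolynomial.aeval z g =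
      ∑ z : σ → L, MvPolynomial.aeval z g -
        ∑ z : σ → L, MvPolynomial.aeval z (E ^ (Fintype.card L - 1) * g) := by
  rw [Finset.sum_filter, ← Finset.sum_sub_distrib]
  refine Finset.sum_congr rfl fun z _ => ?_
  rw [map_mul, map_pow]
  split_ifs with hz
  · rw [hz, zero_pow (Nat.sub_ne_zero_of_lt Fintype.one_lt_card), zero_mul, sub_zero]
  · rw [FiniteField.pow_card_sub_one_eq_one _ hz, one_mul, sub_self]

variable {K : Type*} [Field K] [Fintype K]

/- Modulo `E`, the operator is `φ` times `s`. On polynomials of degree at most `deg E` it is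
therefore `a ↦ φ a • s + ρ a • E`, with trace `φ s + ρ E`, and it maps `E` to `E * cartier Q g`. -/
theorem truncatedTrace_eq_of_rank_one {r : ℕ} {E g s : MvPolynomial σ K} (hE : E ≠ 0)
    (hs : s.totalDegree ≤ E.totalDegree)
    (hg : g.totalDegree < (Fintype.card σ + 1) * (Fintype.card K ^ r - 1))
    {φ : MvPolynomial σ K →ₗ[K] K} (hφE : φ E = 0)
    (hφ : ∀ a, a.totalDegree ≤ E.totalDegree →
      E ∣ cartierMul (Fintype.card K ^ r) (E ^ (Fintype.card K ^ r - 1) * g) a - φ a • s) :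
    truncatedTrace E.totalDegree
        (cartierMul (Fintype.card K ^ r) (E ^ (Fintype.card K ^ r - 1) * g)) =
      φ s + truncatedTrace 0 (cartierMul (Fintype.card K ^ r) g) := by
  have hmul := cartier_pow_mul r E g
  have hQ : Fintype.card K ^ r ≠ 0 := pow_ne_zero r Fintype.card_ne_zero
  generalize Fintype.card K ^ r = Q at *
  obtain ⟨ρ, hρ⟩ := exists_functional_eq_smul_of_dvd hE
  set T := cartierMul Q (E ^ (Q - 1) * g) with hT
  have hTdeg (a) (ha : a.totalDegree ≤ E.totalDegree) : (T a).totalDegree ≤ E.totalDegree := by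
    rw [hT, cartierMul_apply, mul_assoc]
    rw [add_one_mul] at hg
    have := totalDegree_mul g a
    exact totalDegree_cartier_pow_mul_le hQ (by omega)
  have hdecomp (a) (ha : a.totalDegree ≤ E.totalDegree) :
      T a - φ a • s = ρ (T a - φ a • s) • E :=
    hρ _ (hφ a ha) ((totalDegree_sub _ _).trans (max_le (hTdeg a ha)
      ((totalDegree_smul_le _ _).trans hs)))
  have hTE : ρ (T E) = truncatedTrace 0 (cartierMul Q g) := by
    have hE' := hdecomp E le_rfl
    rw [hφE, zero_smul, sub_zero, hT, cartierMul_apply, mul_right_comm, ← pow_succ,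
      Nat.sub_add_cancel (Nat.pos_of_ne_zero hQ), hmul, cartier_eq_C_truncatedTrace hQ hg, mul_comm,
      ← MvPolynomial.smul_eq_C_mul] at hE'
    rw [hT, cartierMul_apply, mul_right_comm, ← pow_succ,
      Nat.sub_add_cancel (Nat.pos_of_ne_zero hQ), hmul, cartier_eq_C_truncatedTrace hQ hg, mul_comm,
      ← MvPolynomial.smul_eq_C_mul]
    exact (smul_left_injective K hE hE').symm
  rw [truncatedTrace_congr (T' := φ.smulRight s + (ρ ∘ₗ (T - φ.smulRight s)).smulRight E)
      fun a ha => eq_add_of_sub_eq' (hdecomp a ha), truncatedTrace_add, truncatedTrace_smulRight hs,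
    truncatedTrace_smulRight le_rfl, ← hTE]
  simp [hφE]

theorem sum_aeval_zeros_eq_of_rank_one {L : Type*} [Field L] [Fintype L] [DecidableEq σ]
    [DecidableEq L] [Algebra K L] {r : ℕ} (hL : Fintype.card L = Fintype.card K ^ r)
    {E g s : MvPolynomial σ K} (hE : E ≠ 0) (hs : s.totalDegree ≤ E.totalDegree)
    (hg : g.totalDegree < (Fintype.card σ + 1) * (Fintype.card L - 1))
    {φ : MvPolynomial σ K →ₗ[K] K} (hφE : φ E = 0)
    (hφ : ∀ a, a.totalDegree ≤ E.totalDegree →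
      E ∣ cartierMul (Fintype.card L) (E ^ (Fintype.card L - 1) * g) a - φ a • s) :
    ∑ z : σ → L with MvPolynomial.aeval z E = 0, MvPolynomial.aeval z g =
      algebraMap K L ((-1) ^ (Fintype.card σ + 1) * φ s) := by
  have hEg : (E ^ (Fintype.card L - 1) * g).totalDegree <
      (Fintype.card L - 1) * (E.totalDegree + 1 + Fintype.card σ) := by
    have h₁ := totalDegree_mul (E ^ (Fintype.card L - 1)) g
    have h₂ := totalDegree_pow E (Fintype.card L - 1)
    simp only [mul_add, mul_one, add_mul, one_mul, mul_comm (Fintype.card σ)] at hg ⊢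
    omega
  have htrace : truncatedTrace E.totalDegree
        (cartierMul (Fintype.card L) (E ^ (Fintype.card L - 1) * g)) =
      φ s + truncatedTrace 0 (cartierMul (Fintype.card L) g) := by
    rw [hL] at hg hφ ⊢
    exact truncatedTrace_eq_of_rank_one hE hs hg hφE hφ
  rw [sum_aeval_filter_zeros, sum_aeval_eq_truncatedTrace (d := 0) (by
    rwa [zero_add, mul_comm, add_comm 1]), sum_aeval_eq_truncatedTrace hEg, htrace, ← map_sub]
  congr 1
  ring

end TraceFormula

section Points

open MvPolynomial

variable {σ K : Type*} [Fintype σ] [Field K] [Fintype K]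

theorem span_le_comap_cartierMul (E : MvPolynomial σ K) :
    (Ideal.span {E}).restrictScalars K ≤ ((Ideal.span {E}).restrictScalars K).comap
      (cartierMul (Fintype.card K) (E ^ (Fintype.card K - 1))) := fun a ha => by
  obtain ⟨b, rfl⟩ := Ideal.mem_span_singleton.1 ha
  refine Ideal.mem_span_singleton.2 ⟨cartier (Fintype.card K) b, ?_⟩
  have := cartier_pow_mul 1 E b
  rwa [pow_one, ← Nat.sub_add_cancel (Fintype.card_pos (α := K)), pow_succ, mul_assoc,
    Nat.sub_add_cancel Fintype.card_pos] at this

/-- The Cartier operator of the hypersurface `E = 0` over the field with `q` elements: it is induced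
by `a ↦ cartier q (E ^ (q - 1) * a)`. -/
noncomputable def quotientCartier (E : MvPolynomial σ K) :
    Module.End K (MvPolynomial σ K ⧸ Ideal.span {E}) :=
  (Submodule.Quotient.restrictScalarsEquiv K (Ideal.span {E})).conj
    (Submodule.mapQ _ _ _ (span_le_comap_cartierMul E))

theorem quotientCartier_mk (E a : MvPolynomial σ K) :
    quotientCartier E (Ideal.Quotient.mk _ a) =
      Ideal.Quotient.mk _ (cartierMul (Fintype.card K) (E ^ (Fintype.card K - 1)) a) :=
  rfl

theorem quotientCartier_pow_mk (E : MvPolynomial σ K) (r : ℕ) (a : MvPolynomial σ K) :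
    (quotientCartier E ^ r) (Ideal.Quotient.mk _ a) =
      Ideal.Quotient.mk _ (cartierMul (Fintype.card K ^ r) (E ^ (Fintype.card K ^ r - 1)) a) := by
  have hq (i : ℕ) : Fintype.card K ^ i ≠ 0 := pow_ne_zero i Fintype.card_ne_zero
  induction r with
  | zero =>
    have : cartier 1 a = a := MvPolynomial.ext _ _ fun v => by
      rw [coeff_cartier one_ne_zero]
      congr 1
      ext i
      simp
    simp [this]
  | succ r ih =>
    have hexp : Fintype.card K ^ (r + 1) - 1 =
        (Fintype.card K - 1) * Fintype.card K ^ r + (Fintype.card K ^ r - 1) := by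
      rw [pow_succ', Nat.sub_mul, one_mul, ← Nat.add_sub_assoc (Nat.pos_of_ne_zero (hq r)),
        Nat.sub_add_cancel (Nat.le_mul_of_pos_left _ Fintype.card_pos)]
    rw [pow_succ', Module.End.mul_apply, ih, quotientCartier_mk, cartierMul_apply, cartierMul_apply,
      cartierMul_apply, ← cartier_pow_mul, cartier_cartier Fintype.card_ne_zero (hq r), ← pow_succ',
      ← mul_assoc, ← pow_mul, ← pow_add, hexp]

theorem isCartierLinear_quotientCartier {E : MvPolynomial σ K} (hE : E ≠ 0) :
    IsCartierLinear (Fintype.card K) (quotientCartier E) where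
  map_pow_mul a b := by
    obtain ⟨a, rfl⟩ := Ideal.Quotient.mk_surjective a
    obtain ⟨b, rfl⟩ := Ideal.Quotient.mk_surjective b
    have := cartier_pow_mul 1 a (E ^ (Fintype.card K - 1) * b)
    rw [pow_one] at this
    rw [← map_pow, ← map_mul, quotientCartier_mk, quotientCartier_mk, ← map_mul, cartierMul_apply,
      mul_left_comm, this, cartierMul_apply]
  exists_map_mul_ne_zero {b} hb := by
    obtain ⟨b, rfl⟩ := Ideal.Quotient.mk_surjective b
    rw [ne_eq, Ideal.Quotient.eq_zero_iff_dvd] at hb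
    obtain ⟨u, -, hu⟩ := exists_not_dvd_cartier hE hb 1
    refine ⟨Ideal.Quotient.mk _ u, ?_⟩
    rwa [← map_mul, quotientCartier_mk, ne_eq, Ideal.Quotient.eq_zero_iff_dvd,
      ← pow_one (Fintype.card K)]

theorem exists_rank_one_family_quotientCartier {E w : MvPolynomial σ K} (hE : Prime E)
    (hw : ¬ E ∣ w) (hA : HasTrivialFrobeniusConstants K (MvPolynomial σ K ⧸ Ideal.span {E})
      (Fintype.card K)) (d : ℕ) :
    ∃ (l N : ℕ) (c : MvPolynomial σ K) (g : Fin N → MvPolynomial σ K)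
      (φ : Fin N → MvPolynomial σ K →ₗ[K] K), ¬ E ∣ c ∧ (∀ i, w ∣ g i ∧ φ i E = 0 ∧
        ∀ a, a.totalDegree ≤ d → (quotientCartier E ^ l) (Ideal.Quotient.mk _ (g i * a)) =
          φ i a • Ideal.Quotient.mk _ c) ∧
      ∀ a, a.totalDegree ≤ d → ¬ E ∣ a → ∃ i, φ i a ≠ 0 := by
  have := (Ideal.span_singleton_prime hE.ne_zero).2 hE
  have hκ := isCartierLinear_quotientCartier hE.ne_zero
  set π := (Ideal.Quotient.mkₐ K (Ideal.span {E})).toLinearMap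
  have hπ {a : MvPolynomial σ K} (ha : a.totalDegree ≤ d) :
      Ideal.Quotient.mk _ a ∈ (restrictTotalDegree σ K d).map π :=
    Submodule.mem_map_of_mem ((mem_restrictTotalDegree σ d a).2 ha)
  obtain ⟨l, c, g, ψ, hc, hψ, hψ0⟩ :=
    hκ.exists_rank_one_family hA ((restrictTotalDegree σ K d).map π)
  obtain ⟨c, rfl⟩ := Ideal.Quotient.mk_surjective c
  choose g' hg' using fun i => Ideal.Quotient.mk_surjective (g i)
  rw [ne_eq, Ideal.Quotient.eq_zero_iff_dvd] at hc
  refine ⟨l, _, w * c, fun i => w ^ Fintype.card K ^ l * g' i, fun i => ψ i ∘ₗ π,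
    fun h => (hE.dvd_or_dvd h).elim hw hc, fun i => ⟨?_, ?_, fun a ha => ?_⟩, fun a ha hEa => ?_⟩
  · exact (dvd_pow_self w (pow_ne_zero l Fintype.card_ne_zero)).mul_right _
  · exact (congrArg (ψ i) (Ideal.Quotient.mk_singleton_self E)).trans (map_zero _)
  · rw [mul_assoc, map_mul, map_pow, (hκ.pow l).map_pow_mul, map_mul, hg', hψ i _ (hπ ha),
      mul_smul_comm, map_mul]
    rfl
  · exact hψ0 _ (hπ ha) ((Ideal.Quotient.eq_zero_iff_dvd E a).not.2 hEa)

theorem lt_of_le_pow_card_mul_add {n l m D e u : ℕ} {q : ℕ} (hq : 1 < q) (hm : D + n < m)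
    (hu : u ≤ n * (q ^ m - 1)) (he : e ≤ q ^ l * u + D) : e < (n + 1) * (q ^ (m + l) - 1) := by
  obtain ⟨M, hM⟩ := Nat.exists_eq_succ_of_ne_zero (pow_ne_zero m (by omega : q ≠ 0))
  obtain ⟨P, hP⟩ := Nat.exists_eq_succ_of_ne_zero (pow_ne_zero l (by omega : q ≠ 0))
  have hmM : m ≤ M := Nat.le_of_lt_succ (hM ▸ Nat.lt_pow_self hq)
  rw [hM, Nat.succ_sub_one] at hu
  rw [hP] at he
  calc
    e ≤ (P + 1) * (n * M) + D := he.trans (by gcongr)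
    _ < (P + 1) * (n * M) + M := by omega
    _ ≤ (n + 1) * (M * P + M + P) := by nlinarith
    _ = _ := by rw [pow_add, hM, hP]; congr 1; lia

theorem exists_rank_one_cartierMul {E w : MvPolynomial σ K} (hE : Prime E) (hw : ¬ E ∣ w)
    (hA : HasTrivialFrobeniusConstants K (MvPolynomial σ K ⧸ Ideal.span {E}) (Fintype.card K)) :
    ∃ r₀, ∀ r ≥ r₀, ∃ (g s : MvPolynomial σ K) (φ : MvPolynomial σ K →ₗ[K] K),
      w ∣ g ∧ g.totalDegree < (Fintype.card σ + 1) * (Fintype.card K ^ r - 1) ∧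
      s.totalDegree ≤ E.totalDegree ∧ φ E = 0 ∧ φ s ≠ 0 ∧ ∀ a, a.totalDegree ≤ E.totalDegree →
        E ∣ cartierMul (Fintype.card K ^ r) (E ^ (Fintype.card K ^ r - 1) * g) a - φ a • s := by
  obtain ⟨l, N, c, g, φ, hc, hφ, hφ0⟩ :=
    exists_rank_one_family_quotientCartier hE hw hA E.totalDegree
  set D := c.totalDegree + Finset.univ.sup fun i => (g i).totalDegree
  refine ⟨D + Fintype.card σ + 1 + l, fun r hr => ?_⟩
  obtain ⟨m, rfl⟩ : ∃ m, r = m + l := ⟨r - l, by omega⟩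
  obtain ⟨u, hu, hs⟩ := exists_not_dvd_cartier hE.ne_zero hc m
  have hQ (i : ℕ) : Fintype.card K ^ i ≠ 0 := pow_ne_zero i Fintype.card_ne_zero
  set s := cartier (Fintype.card K ^ m) (E ^ (Fintype.card K ^ m - 1) * (u * c))
  have hsdeg : s.totalDegree ≤ E.totalDegree := by
    have h₁ := totalDegree_mul u c
    have h₂ : m < Fintype.card K ^ m := Nat.lt_pow_self Fintype.one_lt_card
    refine totalDegree_cartier_pow_mul_le (hQ m) ?_
    omega
  obtain ⟨i, hi⟩ := hφ0 s hsdeg hs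
  obtain ⟨hwg, hφE, hφi⟩ := hφ i
  refine ⟨u ^ Fintype.card K ^ l * g i, s, φ i, hwg.mul_left _, ?_, hsdeg, hφE, hi, fun a ha => ?_⟩
  · refine lt_of_le_pow_card_mul_add (D := D) Fintype.one_lt_card (by omega) hu
      ((totalDegree_mul _ _).trans (add_le_add (totalDegree_pow _ _) ?_))
    exact (Finset.le_sup (f := fun i => (g i).totalDegree) (Finset.mem_univ i)).trans
      (Nat.le_add_left _ _)
  · rw [← Ideal.Quotient.eq_zero_iff_dvd, map_sub, sub_eq_zero]
    have := (isCartierLinear_quotientCartier hE.ne_zero).pow_add_map_pow_mul m l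
      (Ideal.Quotient.mk _ u) (Ideal.Quotient.mk _ (g i * a))
    rw [hφi a ha, ← map_pow, ← map_mul, quotientCartier_pow_mk, mul_smul_comm, map_smul, ← map_mul,
      quotientCartier_pow_mk] at this
    rw [cartierMul_apply, mul_assoc, mul_assoc]
    exact this

/- By the trace formula, the sum of `g` over the zeros of `E` is the nonzero trace of an operator of
rank one; so `g`, hence `w`, does not vanish at all of them. -/
theorem exists_zero_of_hasTrivialFrobeniusConstants {σ K : Type*} [Finite σ] [Field K]
    [Fintype K] {E w : MvPolynomial σ K} (hE : Prime E) (hw : ¬ E ∣ w)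
    (hA : HasTrivialFrobeniusConstants K (MvPolynomial σ K ⧸ Ideal.span {E}) (Fintype.card K)) :
    ∃ r₀, ∀ r ≥ r₀, ∀ (L : Type*) [Field L] [Fintype L] [Algebra K L],
      Fintype.card L = Fintype.card K ^ r →
        ∃ z : σ → L, MvPolynomial.aeval z E = 0 ∧ MvPolynomial.aeval z w ≠ 0 := by
  classical
  have := Fintype.ofFinite σ
  obtain ⟨r₀, h⟩ := exists_rank_one_cartierMul hE hw hA
  refine ⟨r₀, fun r hr L _ _ _ hL => ?_⟩
  obtain ⟨g, s, φ, ⟨g', rfl⟩, hg, hs, hφE, hφs, hφ⟩ := h r hr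
  rw [← hL] at hg hφ
  by_contra! hzero
  have hsum := sum_aeval_zeros_eq_of_rank_one hL hE.ne_zero hs hg hφE hφ
  rw [Finset.sum_eq_zero fun z hz => by
    rw [map_mul, hzero z (Finset.mem_filter.1 hz).2, zero_mul], eq_comm, map_eq_zero] at hsum
  exact mul_ne_zero (pow_ne_zero _ (neg_ne_zero.2 one_ne_zero)) hφs hsum

end Points

section TrivialConstants

section PolynomialRing

variable {τ k : Type*} [Field k]

theorem totalDegree_eq_zero_of_pow_dvd {u v : MvPolynomial τ k} {n : ℕ} (hv : v ≠ 0)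
    (huv : u ^ n ∣ v) (hn : v.totalDegree < n) : u.totalDegree = 0 := by
  have hn0 : n ≠ 0 := by omega
  have hu : u ≠ 0 := by
    rintro rfl
    exact hv (zero_dvd_iff.1 (by rwa [zero_pow hn0] at huv))
  have totalDegree_pow_eq (j : ℕ) : (u ^ j).totalDegree = j * u.totalDegree := by
    induction j with
    | zero => simp
    | succ j ih =>
      rw [pow_succ, MvPolynomial.totalDegree_mul_of_isDomain (pow_ne_zero _ hu) hu, ih, add_one_mul]
  have hle := MvPolynomial.totalDegree_le_of_dvd_of_isDomain huv hv
  rw [totalDegree_pow_eq] at hle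
  by_contra h0
  exact absurd (Nat.le_mul_of_pos_right n (Nat.pos_of_ne_zero h0)) (by omega)

/- Write a Frobenius constant as a quotient of `q ^ r`-th powers in lowest terms: the two powers
divide the given numerator and denominator, hence are constant once `q ^ r` is large. -/
theorem hasTrivialFrobeniusConstants_mvPolynomial {q : ℕ} (hq : 1 < q) :
    HasTrivialFrobeniusConstants k (MvPolynomial τ k) q := by
  intro x y hy hxy
  obtain rfl | hx := eq_or_ne x 0
  · exact ⟨0, by simp⟩
  obtain ⟨a, b, ha, hab⟩ := hxy (x.totalDegree + y.totalDegree)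
  have hQ : x.totalDegree + y.totalDegree < q ^ (x.totalDegree + y.totalDegree) :=
    Nat.lt_pow_self hq
  generalize q ^ (x.totalDegree + y.totalDegree) = Q at hab hQ
  obtain ⟨a, b, c, hrel, rfl, rfl⟩ := UniqueFactorizationMonoid.exists_reduced_factors a ha b
  obtain ⟨hc, ha⟩ := mul_ne_zero_iff.1 ha
  rw [mul_pow, mul_pow, mul_assoc, mul_assoc] at hab
  replace hab : a ^ Q * x = b ^ Q * y := mul_left_cancel₀ (pow_ne_zero _ hc) hab
  have hrel' : IsRelPrime (a ^ Q) (b ^ Q) := hrel.pow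
  have hay : a ^ Q ∣ y := hrel'.dvd_of_dvd_mul_left (Dvd.intro _ hab)
  have hbx : b ^ Q ∣ x := hrel'.symm.dvd_of_dvd_mul_left (Dvd.intro _ hab.symm)
  have ha_const := MvPolynomial.totalDegree_eq_zero_iff_eq_C.1
    (totalDegree_eq_zero_of_pow_dvd hy hay (by omega))
  have hb_const := MvPolynomial.totalDegree_eq_zero_iff_eq_C.1
    (totalDegree_eq_zero_of_pow_dvd hx hbx (by omega))
  have ha₀ : MvPolynomial.coeff 0 a ≠ 0 := fun h0 => ha (by rw [ha_const, h0, map_zero])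
  refine ⟨(MvPolynomial.coeff 0 a ^ Q)⁻¹ * MvPolynomial.coeff 0 b ^ Q, ?_⟩
  rw [mul_smul, eq_inv_smul_iff₀ (pow_ne_zero _ ha₀), MvPolynomial.smul_eq_C_mul,
    MvPolynomial.smul_eq_C_mul, map_pow, map_pow, ← ha_const, ← hb_const, hab]

end PolynomialRing

theorem exists_det_add_smul_eq_zero {k ι : Type*} [Field k] [IsAlgClosed k] [Fintype ι]
    [DecidableEq ι] [Nonempty ι] (S : Matrix ι ι k) {T : Matrix ι ι k} (hT : T.det ≠ 0) :
    ∃ t : k, (S + t • T).det = 0 := by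
  obtain ⟨t, ht⟩ := spectrum.nonempty_of_isAlgClosed_of_finiteDimensional k (-(T⁻¹ * S))
  have hfactor : S + t • T = T * (algebraMap k (Matrix ι ι k) t - -(T⁻¹ * S)) := by
    rw [sub_neg_eq_add, mul_add, ← mul_assoc, Matrix.mul_nonsing_inv _ hT.isUnit, one_mul,
      ← Algebra.commutes, ← Algebra.smul_def, add_comm]
  refine ⟨t, ?_⟩
  rw [spectrum.mem_iff, Matrix.isUnit_iff_isUnit_det, isUnit_iff_ne_zero, not_not] at ht
  rw [hfactor, Matrix.det_mul, ht, mul_zero]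

section FiniteExtension

variable {τ k S : Type*} [Field k] [CommRing S] [IsDomain S] [Algebra (MvPolynomial τ k) S]
  [Module.Finite (MvPolynomial τ k) S] [Module.Free (MvPolynomial τ k) S]

theorem exists_eval_norm_add_smul_eq_zero [IsAlgClosed k] (s : S) {t : S} (ht : t ≠ 0) :
    ∃ (z : τ → k) (a : k), MvPolynomial.eval z (Algebra.norm (MvPolynomial τ k) t) ≠ 0 ∧
      MvPolynomial.eval z
        (Algebra.norm (MvPolynomial τ k) (s + MvPolynomial.C (σ := τ) a • t)) = 0 := by
  classical
  let b := Module.Free.chooseBasis (MvPolynomial τ k) S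
  have eval_norm (z : τ → k) (x : S) :
      MvPolynomial.eval z (Algebra.norm (MvPolynomial τ k) x) =
        ((Algebra.leftMulMatrix b x).map (MvPolynomial.eval z)).det := by
    rw [Algebra.norm_eq_matrix_det b, RingHom.map_det]
    rfl
  obtain ⟨z, hz⟩ : ∃ z : τ → k, MvPolynomial.eval z (Algebra.norm (MvPolynomial τ k) t) ≠ 0 := by
    by_contra! hzero
    exact (Algebra.norm_ne_zero_iff_of_basis b).2 ht (MvPolynomial.funext fun z => by simp [hzero])
  have : Nonempty (Module.Free.ChooseBasisIndex (MvPolynomial τ k) S) := b.index_nonempty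
  obtain ⟨a, ha⟩ := exists_det_add_smul_eq_zero
    ((Algebra.leftMulMatrix b s).map (MvPolynomial.eval z)) (by rwa [eval_norm] at hz)
  refine ⟨z, a, hz, ?_⟩
  rw [eval_norm, ← ha]
  congr 1
  ext i j
  simp

/- If `s / t` is a Frobenius constant, then so is the norm of `s / t + a` for every `a : k`, which
is therefore an element of `k`; choosing `a` such that it vanishes at a point gives `s / t = -a`. -/
theorem hasTrivialFrobeniusConstants_of_finite_free {K : Type*} [Field K] [Fintype K] [Algebra K S]
    [IsAlgClosed k] [Algebra k S] [IsScalarTower k (MvPolynomial τ k) S] :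
    HasTrivialFrobeniusConstants k S (Fintype.card K) := by
  intro s t ht hst
  set N : S →* MvPolynomial τ k := Algebra.norm (MvPolynomial τ k) with hN
  have norm_eq_zero {x : S} : N x = 0 ↔ x = 0 :=
    Algebra.norm_eq_zero_iff_of_basis (Module.Free.chooseBasis (MvPolynomial τ k) S)
  obtain ⟨z, a, hz, ha⟩ := exists_eval_norm_add_smul_eq_zero (τ := τ) (k := k) s ht
  rw [← hN] at hz ha
  rw [show MvPolynomial.C (σ := τ) a • t = a • t from algebraMap_smul _ a t] at ha
  obtain ⟨c, hc⟩ := hasTrivialFrobeniusConstants_mvPolynomial (Fintype.one_lt_card (α := K))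
    (N (s + a • t)) (N t) (norm_eq_zero.not.2 ht) fun r => by
      obtain ⟨α, β, hα, hαβ⟩ := hst r
      obtain ⟨u, rfl⟩ := IsAlgClosed.exists_pow_nat_eq a
        (pow_pos (Fintype.card_pos (α := K)) r)
      refine ⟨N α, N (β + u • α), norm_eq_zero.not.2 hα, ?_⟩
      rw [← map_pow, ← map_pow, ← map_mul, ← map_mul,
        ← frobeniusAlgHom_pow_apply (K := K) r (_ + _), map_add, frobeniusAlgHom_pow_apply,
        frobeniusAlgHom_pow_apply, _root_.smul_pow, add_mul, ← hαβ, mul_add, smul_mul_assoc,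
        mul_smul_comm]
  have hc0 : c = 0 := by
    rw [hc, MvPolynomial.smul_eval] at ha
    exact (mul_eq_zero.1 ha).resolve_right hz
  rw [hc0, zero_smul, norm_eq_zero] at hc
  exact ⟨-a, by rw [neg_smul, ← eq_neg_iff_add_eq_zero.2 hc]⟩

end FiniteExtension

section Descent

open TensorProduct

theorem HasTrivialFrobeniusConstants.of_algEquiv {K A B : Type*} [CommRing K] [CommRing A]
    [CommRing B] [Algebra K A] [Algebra K B] {q : ℕ} (e : A ≃ₐ[K] B)
    (hB : HasTrivialFrobeniusConstants K B q) : HasTrivialFrobeniusConstants K A q := by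
  intro s t ht hst
  obtain ⟨c, hc⟩ := hB (e s) (e t) ((map_ne_zero_iff e e.injective).2 ht) fun r => by
    obtain ⟨α, β, hα, hαβ⟩ := hst r
    exact ⟨e α, e β, (map_ne_zero_iff e e.injective).2 hα, by simpa using congrArg e hαβ⟩
  exact ⟨c, e.injective (by rw [hc, map_smul])⟩

theorem HasTrivialFrobeniusConstants.of_baseChange {K k A : Type*} [Field K] [Field k] [CommRing A]
    [Algebra K k] [Algebra K A] {q : ℕ} (hA : HasTrivialFrobeniusConstants k (k ⊗[K] A) q) :
    HasTrivialFrobeniusConstants K A q := by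
  intro s t ht hst
  let i : A →ₐ[K] k ⊗[K] A := Algebra.TensorProduct.includeRight
  have hi : Function.Injective i :=
    Algebra.TensorProduct.includeRight_injective (algebraMap K k).injective
  obtain ⟨c, hc⟩ := hA (i s) (i t) ((map_ne_zero_iff i hi).2 ht) fun r => by
    obtain ⟨α, β, hα, hαβ⟩ := hst r
    exact ⟨i α, i β, (map_ne_zero_iff i hi).2 hα, by simpa using congrArg i hαβ⟩
  obtain ⟨ψ, hψ⟩ : ∃ ψ : Module.Dual K A, ψ t ≠ 0 := by
    by_contra! hzero
    exact ht ((Module.forall_dual_apply_eq_zero_iff K t).1 hzero)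
  have hψc : algebraMap K k (ψ s) = algebraMap K k (ψ t) * c := by
    simpa [i, TensorProduct.smul_tmul', Algebra.smul_def] using congrArg (ψ.baseChange k) hc
  have hc' : c = algebraMap K k (ψ s / ψ t) := by
    rw [map_div₀, hψc, mul_div_cancel_left₀ _ ((_root_.map_ne_zero _).2 hψ)]
  exact ⟨ψ s / ψ t, hi (by rw [hc, hc', map_smul, algebraMap_smul])⟩

end Descent

section Isomorphisms

open TensorProduct

/-- Extending scalars from `K` to `k` in a hypersurface. -/
noncomputable def baseChangeQuotientSpanEquiv {σ K : Type*} [Field K] (k : Type*) [Field k]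
    [Algebra K k] (E : MvPolynomial σ K) :
    k ⊗[K] (MvPolynomial σ K ⧸ Ideal.span {E}) ≃ₐ[k]
      MvPolynomial σ k ⧸ Ideal.span {MvPolynomial.map (algebraMap K k) E} :=
  (Algebra.TensorProduct.tensorQuotientEquiv (R := K) k (MvPolynomial σ K) k
    (Ideal.span {E})).trans <|
    Ideal.quotientEquivAlg _ _ (MvPolynomial.algebraTensorAlgEquiv K k) <| by
      simp [Ideal.map_span]

/-- The coordinate ring of the hypersurface of `E` as an algebra over the polynomial ring in all
variables but the first. -/
noncomputable def quotientSpanEquivAdjoinRoot {k : Type*} [Field k] {n : ℕ}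
    (E : MvPolynomial (Fin (n + 1)) k) :
    (MvPolynomial (Fin (n + 1)) k ⧸ Ideal.span {E}) ≃ₐ[k]
      AdjoinRoot (MvPolynomial.finSuccEquiv k n E) :=
  Ideal.quotientEquivAlg _ _ (MvPolynomial.finSuccEquiv k n) <| by
    simp [Ideal.map_span]

end Isomorphisms

theorem hasTrivialFrobeniusConstants_of_prime_of_monic {K k : Type*} [Field K] [Fintype K] [Field k]
    [IsAlgClosed k] [Algebra K k] {n : ℕ} {E : MvPolynomial (Fin (n + 1)) k} (hE : Prime E)
    (hmonic : (MvPolynomial.finSuccEquiv k n E).Monic) :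
    HasTrivialFrobeniusConstants k (MvPolynomial (Fin (n + 1)) k ⧸ Ideal.span {E})
      (Fintype.card K) := by
  refine .of_algEquiv (quotientSpanEquivAdjoinRoot E) ?_
  have : IsDomain (AdjoinRoot (MvPolynomial.finSuccEquiv k n E)) :=
    AdjoinRoot.isDomain_of_prime ((MulEquiv.prime_iff (MvPolynomial.finSuccEquiv k n)).2 hE)
  have := hmonic.finite_adjoinRoot
  have := hmonic.free_adjoinRoot
  exact hasTrivialFrobeniusConstants_of_finite_free (K := K) (τ := Fin n)

theorem prime_of_prime_map {σ K k : Type*} [Field K] [Field k] [Algebra K k]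
    {E : MvPolynomial σ K} (hE : Prime (MvPolynomial.map (algebraMap K k) E)) : Prime E := by
  have hE₀ : E ≠ 0 := fun h0 => hE.ne_zero (by rw [h0, map_zero])
  rw [← Ideal.span_singleton_prime hE.ne_zero, ← Ideal.Quotient.isDomain_iff_prime] at hE
  rw [← Ideal.span_singleton_prime hE₀, ← Ideal.Quotient.isDomain_iff_prime]
  exact ((baseChangeQuotientSpanEquiv k E).injective.comp
    (Algebra.TensorProduct.includeRight_injective (algebraMap K k).injective)).isDomain
    ((baseChangeQuotientSpanEquiv k E).toRingHom.comp
      Algebra.TensorProduct.includeRight.toRingHom)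

theorem exists_zero_of_absolutelyIrreducible {K : Type*} [Field K] [Fintype K] {n : ℕ}
    {E w : MvPolynomial (Fin (n + 1)) K}
    (hE : Prime (MvPolynomial.map (algebraMap K (AlgebraicClosure K)) E))
    (hmonic : (MvPolynomial.finSuccEquiv (AlgebraicClosure K) n
      (MvPolynomial.map (algebraMap K (AlgebraicClosure K)) E)).Monic)
    (hw : ¬ E ∣ w) :
    ∃ r₀, ∀ r ≥ r₀, ∀ (L : Type*) [Field L] [Fintype L] [Algebra K L],
      Fintype.card L = Fintype.card K ^ r →
        ∃ z : Fin (n + 1) → L, MvPolynomial.aeval z E = 0 ∧ MvPolynomial.aeval z w ≠ 0 :=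
  exists_zero_of_hasTrivialFrobeniusConstants (prime_of_prime_map hE) hw <|
    .of_baseChange <| .of_algEquiv (baseChangeQuotientSpanEquiv (AlgebraicClosure K) E) <|
      hasTrivialFrobeniusConstants_of_prime_of_monic (K := K) hE hmonic

end TrivialConstants

section WeightedLeadingForm

variable {σ k : Type*} [Field k] (w : σ → ℕ)

/-- The substitution `X i ↦ X i * T ^ w i`. The coefficient of `T ^ j` in the image of a polynomial
is its component of weight `j`, so that the leading coefficient is its leading form. -/
noncomputable def weightSubst : MvPolynomial σ k →ₐ[k] (MvPolynomial σ k)[X] :=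
  MvPolynomial.aeval fun i => C (MvPolynomial.X i) * X ^ w i

theorem weightSubst_monomial (u : σ →₀ ℕ) (a : k) :
    weightSubst w (MvPolynomial.monomial u a) =
      C (MvPolynomial.monomial u a) * X ^ Finsupp.weight w u := by
  rw [weightSubst, MvPolynomial.aeval_monomial, MvPolynomial.monomial_eq, Finsupp.weight_apply,
    Finsupp.sum, ← Finset.prod_pow_eq_pow_sum, Finsupp.prod, Finsupp.prod, map_mul, map_prod,
    mul_assoc, ← Finset.prod_mul_distrib]
  simp only [map_pow, mul_pow, ← pow_mul, smul_eq_mul, mul_comm (w _)]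
  rfl

theorem coeff_weightSubst (A : MvPolynomial σ k) (j : ℕ) :
    (weightSubst w A).coeff j = MvPolynomial.weightedHomogeneousComponent w j A := by
  induction A using MvPolynomial.induction_on' with
  | monomial u a =>
    rw [weightSubst_monomial, coeff_C_mul_X_pow, MvPolynomial.weightedHomogeneousComponent_of_mem
      (MvPolynomial.isWeightedHomogeneous_monomial w u a rfl)]
  | add P Q hP hQ => rw [map_add, coeff_add, hP, hQ, map_add]

theorem aeval_one_weightSubst (A : MvPolynomial σ k) :
    aeval (1 : MvPolynomial σ k) (weightSubst w A) = A := by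
  have hid : ((aeval (1 : MvPolynomial σ k)).restrictScalars k).comp (weightSubst w) =
      AlgHom.id k (MvPolynomial σ k) := by
    ext i
    simp [weightSubst]
  exact DFunLike.congr_fun hid A

theorem isUnit_of_isUnit_leadingCoeff_weightSubst {A : MvPolynomial σ k}
    (hA : IsUnit (weightSubst w A).leadingCoeff) : IsUnit A := by
  obtain ⟨c, -, hc⟩ := MvPolynomial.isUnit_iff_eq_C_of_isReduced.1 hA
  have hdeg : (weightSubst w A).natDegree = 0 := by
    refine MvPolynomial.IsWeightedHomogeneous.inj_right (w := w) hA.ne_zero ?_ ?_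
    · rw [leadingCoeff, coeff_weightSubst]
      exact MvPolynomial.weightedHomogeneousComponent_isWeightedHomogeneous _ _
    · rw [hc]
      exact MvPolynomial.isWeightedHomogeneous_C w c
  rw [leadingCoeff, hdeg] at hA
  rwa [← aeval_one_weightSubst w A, eq_C_of_natDegree_eq_zero hdeg, aeval_C]

theorem irreducible_of_irreducible_leadingCoeff_weightSubst {A : MvPolynomial σ k}
    (hA : Irreducible (weightSubst w A).leadingCoeff) : Irreducible A where
  not_isUnit h := by
    obtain ⟨c, hc, hcA⟩ := Polynomial.isUnit_iff.1 (h.map (weightSubst w))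
    exact hA.not_isUnit (by rwa [← hcA, leadingCoeff_C])
  isUnit_or_isUnit a b hab := by
    rw [hab, map_mul, leadingCoeff_mul] at hA
    exact (hA.isUnit_or_isUnit rfl).imp (isUnit_of_isUnit_leadingCoeff_weightSubst w)
      (isUnit_of_isUnit_leadingCoeff_weightSubst w)

theorem irreducible_add_of_isWeightedHomogeneous {A R : MvPolynomial σ k} {N : ℕ}
    (hA : Irreducible A) (hAN : MvPolynomial.IsWeightedHomogeneous w A N)
    (hR : ∀ u ∈ R.support, Finsupp.weight w u < N) : Irreducible (A + R) := by
  have coeff_of_le (j : ℕ) (hj : N ≤ j) : (weightSubst w (A + R)).coeff j =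
      if N = j then A else 0 := by
    rw [coeff_weightSubst, map_add, MvPolynomial.weightedHomogeneousComponent_of_mem hAN,
      MvPolynomial.weightedHomogeneousComponent_eq_zero' _ _ fun u hu => ((hR u hu).trans_le hj).ne,
      add_zero]
    simp only [eq_comm]
  have coeff_N : (weightSubst w (A + R)).coeff N = A := by rw [coeff_of_le N le_rfl, if_pos rfl]
  have hdeg : (weightSubst w (A + R)).natDegree = N :=
    natDegree_eq_of_le_of_coeff_ne_zero
      (natDegree_le_iff_coeff_eq_zero.2 fun j hj => by rw [coeff_of_le j hj.le, if_neg hj.ne])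
      (by rw [coeff_N]; exact hA.ne_zero)
  refine irreducible_of_irreducible_leadingCoeff_weightSubst w ?_
  rwa [leadingCoeff, hdeg, coeff_N]

end WeightedLeadingForm

section Eisenstein

theorem irreducible_X_pow_add_C_of_prime_dvd {R : Type*} [CommRing R] [IsDomain R] {c π : R} {M : ℕ}
    (hM : M ≠ 0) (hπ : Prime π) (hc : π ∣ c) (hc' : ¬ π ^ 2 ∣ c) : Irreducible (X ^ M + C c) := by
  have hdeg := degree_X_pow_add_C (Nat.pos_of_ne_zero hM) c
  have hmonic := monic_X_pow_add_C c hM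
  refine irreducible_of_eisenstein_criterion
    ((Ideal.span_singleton_prime hπ.ne_zero).2 hπ) ?_ ?_ ?_ ?_ hmonic.isPrimitive
  · rw [hmonic.leadingCoeff, Ideal.mem_span_singleton, ← isUnit_iff_dvd_one]
    exact hπ.not_isUnit
  · intro j hj
    rw [hdeg, Nat.cast_lt] at hj
    rw [coeff_add, coeff_X_pow, if_neg hj.ne, zero_add, coeff_C, Ideal.mem_span_singleton]
    split_ifs
    exacts [hc, dvd_zero π]
  · rw [hdeg]
    exact_mod_cast Nat.pos_of_ne_zero hM
  · rwa [coeff_add, coeff_X_pow, if_neg hM.symm, zero_add, coeff_C_zero, Ideal.span_singleton_pow,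
      Ideal.mem_span_singleton]

variable {τ k : Type*} [Field k] {b : k} {M m : ℕ} {i j : τ}

theorem exists_prime_dvd_X_pow_add (hij : i ≠ j) (hM : M ≠ 0) :
    ∃ π : MvPolynomial τ k, Prime π ∧
      π ∣ MvPolynomial.X i ^ M + MvPolynomial.C b * MvPolynomial.X j ^ m := by
  classical
  let φ : MvPolynomial τ k →ₐ[k] k[X] := MvPolynomial.aeval fun l => if l = i then X else 1
  have hφ : φ (MvPolynomial.X i ^ M + MvPolynomial.C b * MvPolynomial.X j ^ m) = X ^ M + C b := by
    simp [φ, hij.symm]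
  have hne : MvPolynomial.X i ^ M + MvPolynomial.C b * MvPolynomial.X j ^ m ≠ 0 := by
    intro h0
    rw [h0, map_zero] at hφ
    exact (monic_X_pow_add_C b hM).ne_zero hφ.symm
  obtain ⟨π, hπ, hπc⟩ := WfDvdMonoid.exists_irreducible_factor (fun hu => hM <| by
    rw [← natDegree_X_pow_add_C (n := M) (r := b), ← hφ]
    exact natDegree_eq_zero_of_isUnit (hu.map φ)) hne
  exact ⟨π, hπ.prime, hπc⟩

theorem not_X_dvd_X_pow_add (hij : i ≠ j) (hM : M ≠ 0) (hb : b ≠ 0) :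
    ¬ (MvPolynomial.X i : MvPolynomial τ k) ∣
      MvPolynomial.X i ^ M + MvPolynomial.C b * MvPolynomial.X j ^ m := by
  classical
  rw [dvd_add_right (dvd_pow_self _ hM)]
  intro hdvd
  have := map_dvd (MvPolynomial.eval fun l => if l = i then 0 else 1) hdvd
  simp [hij.symm, hb] at this

theorem not_sq_dvd_X_pow_add (hij : i ≠ j) (hM : (M : k) ≠ 0) (hb : b ≠ 0) {π : MvPolynomial τ k}
    (hπ : Prime π) : ¬ π ^ 2 ∣ MvPolynomial.X i ^ M + MvPolynomial.C b * MvPolynomial.X j ^ m := by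
  have hM₀ : M ≠ 0 := by rintro rfl; simp at hM
  intro hdvd
  have hderiv : MvPolynomial.pderiv i
      (MvPolynomial.X i ^ M + MvPolynomial.C b * MvPolynomial.X j ^ m) =
        MvPolynomial.C (M : k) * MvPolynomial.X i ^ (M - 1) := by
    simp [MvPolynomial.pderiv_X_of_ne hij.symm, Derivation.leibniz_pow]
  have hdvd' : π ∣ MvPolynomial.pderiv i
      (MvPolynomial.X i ^ M + MvPolynomial.C b * MvPolynomial.X j ^ m) := by
    obtain ⟨g, hg⟩ := hdvd
    rw [hg, pow_two, mul_assoc, Derivation.leibniz, Derivation.leibniz, smul_eq_mul, smul_eq_mul,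
      smul_eq_mul, smul_eq_mul]
    exact dvd_add (Dvd.intro _ rfl) ((Dvd.intro _ rfl).mul_right _)
  rw [hderiv] at hdvd'
  have hπX : π ∣ MvPolynomial.X i := by
    refine hπ.dvd_of_dvd_pow ((hπ.dvd_or_dvd hdvd').resolve_left fun h => hπ.not_isUnit ?_)
    exact isUnit_of_dvd_unit h ((isUnit_iff_ne_zero.2 hM).map MvPolynomial.C)
  have hX : Irreducible (MvPolynomial.X i : MvPolynomial τ k) := MvPolynomial.X_prime.irreducible
  exact not_X_dvd_X_pow_add hij hM₀ hb <|
    (hπ.irreducible.associated_of_dvd hX hπX).dvd'.trans ((dvd_pow_self π two_ne_zero).trans hdvd)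

end Eisenstein

section Surface

variable {k : Type*} [Field k] {H : MvPolynomial (Fin 3) k} {M m : ℕ}

theorem totalDegree_map_le {σ R S : Type*} [CommSemiring R] [CommSemiring S] (φ : R →+* S)
    (P : MvPolynomial σ R) : (MvPolynomial.map φ P).totalDegree ≤ P.totalDegree :=
  Finset.sup_mono (MvPolynomial.support_map_subset φ P)

theorem finSuccEquiv_X_pow_add (H : MvPolynomial (Fin 3) k) (M : ℕ) :
    MvPolynomial.finSuccEquiv k 2 (MvPolynomial.X 0 ^ M + MvPolynomial.X 2 ^ M + H) =
      X ^ M + (C (MvPolynomial.X 1 ^ M) + MvPolynomial.finSuccEquiv k 2 H) := by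
  rw [map_add, map_add, map_pow, map_pow, MvPolynomial.finSuccEquiv_X_zero,
    show (2 : Fin 3) = Fin.succ 1 from rfl, MvPolynomial.finSuccEquiv_X_succ, ← C_pow, add_assoc]

theorem degree_C_add_finSuccEquiv_lt (hH : H.totalDegree < M) :
    (C (MvPolynomial.X 1 ^ M) + MvPolynomial.finSuccEquiv k 2 H).degree < (M : WithBot ℕ) := by
  refine (degree_add_le _ _).trans_lt (max_lt ?_ ?_)
  · exact degree_C_le.trans_lt (by exact_mod_cast Nat.zero_lt_of_lt hH)
  · refine degree_le_natDegree.trans_lt ?_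
    rw [MvPolynomial.natDegree_finSuccEquiv]
    exact_mod_cast (MvPolynomial.degreeOf_le_totalDegree H 0).trans_lt hH

theorem monic_finSuccEquiv_X_pow_add (hH : H.totalDegree < M) :
    (MvPolynomial.finSuccEquiv k 2 (MvPolynomial.X 0 ^ M + MvPolynomial.X 2 ^ M + H)).Monic := by
  rw [finSuccEquiv_X_pow_add]
  exact monic_X_pow_add (degree_C_add_finSuccEquiv_lt hH)

theorem not_X_pow_add_dvd_X_mul_X (hH : H.totalDegree < M) (hM : 2 ≤ M) :
    ¬ MvPolynomial.X 0 ^ M + MvPolynomial.X 2 ^ M + H ∣ MvPolynomial.X 0 * MvPolynomial.X 2 := by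
  intro hdvd
  have hle := natDegree_le_of_dvd (map_dvd (MvPolynomial.finSuccEquiv k 2) hdvd)
    ((map_ne_zero_iff _ (MvPolynomial.finSuccEquiv k 2).injective).2
      (mul_ne_zero (MvPolynomial.X_ne_zero 0) (MvPolynomial.X_ne_zero 2)))
  have hlt := degree_C_add_finSuccEquiv_lt hH
  rw [← degree_X_pow (R := MvPolynomial (Fin 2) k)] at hlt
  rw [finSuccEquiv_X_pow_add, natDegree_add_eq_left_of_degree_lt hlt, natDegree_X_pow, map_mul,
    MvPolynomial.finSuccEquiv_X_zero, show (2 : Fin 3) = Fin.succ 1 from rfl,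
    MvPolynomial.finSuccEquiv_X_succ, natDegree_X_mul (C_ne_zero.2 (MvPolynomial.X_ne_zero 1)),
    natDegree_C] at hle
  omega

theorem irreducible_X_pow_add_X_pow_add_C_mul_X_pow {b : k} (hM : (M : k) ≠ 0) (hb : b ≠ 0) :
    Irreducible (MvPolynomial.X 0 ^ M + MvPolynomial.X 2 ^ M +
      MvPolynomial.C b * MvPolynomial.X 1 ^ m : MvPolynomial (Fin 3) k) := by
  have hM₀ : M ≠ 0 := by rintro rfl; simp at hM
  have hne : (1 : Fin 2) ≠ 0 := by decide
  obtain ⟨π, hπ, hdvd⟩ := exists_prime_dvd_X_pow_add (b := b) (m := m) hne hM₀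
  have := irreducible_X_pow_add_C_of_prime_dvd hM₀ hπ hdvd (not_sq_dvd_X_pow_add hne hM hb hπ)
  rw [← MulEquiv.irreducible_iff (MvPolynomial.finSuccEquiv k 2), finSuccEquiv_X_pow_add]
  rwa [map_mul, map_pow (MvPolynomial.finSuccEquiv k 2), show (1 : Fin 3) = Fin.succ 0 from rfl,
    MvPolynomial.finSuccEquiv_X_succ, MvPolynomial.finSuccEquiv_apply, MvPolynomial.eval₂Hom_C,
    RingHom.comp_apply, ← C_pow, ← C_mul, ← C_add]

theorem weight_lt_of_degree_le {u : Fin 3 →₀ ℕ} (hu : u.degree ≤ m) (hne : u ≠ Finsupp.single 1 m)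
    (hm : m < M) : Finsupp.weight ![m, M, m] u < M * m := by
  rw [Finsupp.degree_eq_sum, Fin.sum_univ_three] at hu
  have hlt : u 1 < m := by
    by_contra! hle
    refine hne (Finsupp.ext fun i => ?_)
    fin_cases i <;> simp <;> omega
  simp only [Finsupp.weight_eq_sum, Fin.sum_univ_three, smul_eq_mul, Matrix.cons_val]
  nlinarith [Nat.zero_le (u 0), Nat.zero_le (u 2)]

/- With `X 0`, `X 1`, `X 2` of weights `m`, `M`, `m`, the leading form is
`X 0 ^ M + X 2 ^ M + b * X 1 ^ m`, where `b` is the coefficient of `X 1 ^ m` in `H`. -/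
theorem irreducible_X_pow_add_X_pow_add (hM : (M : k) ≠ 0) (hH : H.totalDegree ≤ m) (hm : m < M)
    (hb : MvPolynomial.coeff (Finsupp.single 1 m) H ≠ 0) :
    Irreducible (MvPolynomial.X 0 ^ M + MvPolynomial.X 2 ^ M + H) := by
  classical
  set b := MvPolynomial.coeff (Finsupp.single 1 m) H
  have hform : MvPolynomial.IsWeightedHomogeneous ![m, M, m] (MvPolynomial.X 0 ^ M +
      MvPolynomial.X 2 ^ M + MvPolynomial.C b * MvPolynomial.X 1 ^ m) (M * m) :=
    (((MvPolynomial.isWeightedHomogeneous_X k ![m, M, m] 0).pow M).add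
      ((MvPolynomial.isWeightedHomogeneous_X k ![m, M, m] 2).pow M)).add <| by
        rw [show M • ![m, M, m] 0 = m • ![m, M, m] 1 from mul_comm M m]
        exact ((MvPolynomial.isWeightedHomogeneous_X k ![m, M, m] 1).pow m).C_mul b
  rw [← add_sub_cancel_left (MvPolynomial.C b * MvPolynomial.X 1 ^ m) H, add_sub_assoc, ← add_assoc]
  refine irreducible_add_of_isWeightedHomogeneous ![m, M, m]
    (irreducible_X_pow_add_X_pow_add_C_mul_X_pow hM hb) hform fun u hu => ?_
  have hu1 : u ≠ Finsupp.single 1 m := by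
    rintro rfl
    simp [MvPolynomial.coeff_X_pow, b] at hu
  have huH : u ∈ H.support := by
    rw [MvPolynomial.mem_support_iff, MvPolynomial.coeff_sub, MvPolynomial.coeff_C_mul,
      MvPolynomial.coeff_X_pow, if_neg hu1.symm, mul_zero, sub_zero] at hu
    exact MvPolynomial.mem_support_iff.2 hu
  exact weight_lt_of_degree_le ((MvPolynomial.le_totalDegree huH).trans hH) hu1 hm

theorem map_X_pow_add_X_pow_add {R : Type*} [CommSemiring R] (φ : k →+* R) :
    MvPolynomial.map φ (MvPolynomial.X 0 ^ M + MvPolynomial.X 2 ^ M + H) =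
      MvPolynomial.X 0 ^ M + MvPolynomial.X 2 ^ M + MvPolynomial.map φ H := by
  simp only [map_add, map_pow, MvPolynomial.map_X]

theorem prime_map_X_pow_add_X_pow_add {K : Type*} [Field K] [Algebra k K] (hM : (M : k) ≠ 0)
    (hH : H.totalDegree ≤ m) (hm : m < M) (hb : MvPolynomial.coeff (Finsupp.single 1 m) H ≠ 0) :
    Prime (MvPolynomial.map (algebraMap k K)
      (MvPolynomial.X 0 ^ M + MvPolynomial.X 2 ^ M + H)) := by
  rw [map_X_pow_add_X_pow_add]
  refine (irreducible_X_pow_add_X_pow_add ?_ ((totalDegree_map_le _ H).trans hH) hm ?_).prime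
  · rwa [← map_natCast (algebraMap k K), _root_.map_ne_zero]
  · rwa [MvPolynomial.coeff_map, _root_.map_ne_zero]

theorem monic_finSuccEquiv_map_X_pow_add {K : Type*} [Field K] [Algebra k K]
    (hH : H.totalDegree < M) :
    (MvPolynomial.finSuccEquiv K 2 (MvPolynomial.map (algebraMap k K)
      (MvPolynomial.X 0 ^ M + MvPolynomial.X 2 ^ M + H))).Monic := by
  rw [map_X_pow_add_X_pow_add]
  exact monic_finSuccEquiv_X_pow_add ((totalDegree_map_le (algebraMap k K) H).trans_lt hH)

end Surface

section SecondDifference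

theorem two_le_of_cast_ne_zero_of_cast_ne_one {R : Type*} [AddMonoidWithOne R] {n : ℕ}
    (h₀ : (n : R) ≠ 0) (h₁ : (n : R) ≠ 1) : 2 ≤ n :=
  (Nat.two_le_iff n).2 ⟨fun hn => h₀ (by simp [hn]), fun hn => h₁ (by simp [hn])⟩

theorem totalDegree_aeval_le {σ R : Type*} [CommSemiring R] (h : R[X]) {a : MvPolynomial σ R}
    (ha : a.totalDegree ≤ 1) : (aeval a h).totalDegree ≤ h.natDegree := by
  rw [aeval_eq_sum_range]
  refine MvPolynomial.totalDegree_finsetSum_le fun i hi => ?_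
  refine (MvPolynomial.totalDegree_smul_le _ _).trans ((MvPolynomial.totalDegree_pow _ _).trans ?_)
  exact (mul_le_of_le_one_right i.zero_le ha).trans (Finset.mem_range_succ_iff.1 hi)

theorem sub_dvd_aeval_sub {R A : Type*} [CommRing R] [CommRing A] [Algebra R A] (h : R[X])
    (a b : A) : a - b ∣ aeval a h - aeval b h := by
  simpa only [aeval_def, eval₂_eq_eval_map] using sub_dvd_eval_sub a b (h.map (algebraMap R A))

theorem coeff_aeval_X_one {R : Type*} [CommSemiring R] (H : MvPolynomial (Fin 3) R) (m : ℕ) :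
    (MvPolynomial.aeval ![(0 : R[X]), X, 0] H).coeff m =
      MvPolynomial.coeff (Finsupp.single 1 m) H := by
  classical
  induction H using MvPolynomial.induction_on' with
  | monomial u a =>
    have hu : u = Finsupp.single 1 m ↔ u 0 = 0 ∧ u 2 = 0 ∧ u 1 = m := by
      simp [Finsupp.ext_iff, Fin.forall_fin_succ, and_comm]
    rw [MvPolynomial.aeval_monomial, Finsupp.prod_fintype _ _ (by simp), Fin.prod_univ_three,
      MvPolynomial.coeff_monomial]
    by_cases h₀ : u 0 = 0 <;> by_cases h₂ : u 2 = 0 <;>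
      simp [hu, h₀, h₂, coeff_X_pow, eq_comm]
  | add P Q hP hQ => rw [map_add, coeff_add, hP, hQ, MvPolynomial.coeff_add]

/-- The second difference `h (Y + X + Z) - h (Y + X) - h (Y + Z) + h Y` of a polynomial, where the
variables `X`, `Y`, `Z` are numbered `0`, `1`, `2`. -/
noncomputable def secondDifference {R : Type*} [CommRing R] (h : R[X]) : MvPolynomial (Fin 3) R :=
  aeval (MvPolynomial.X 1 + MvPolynomial.X 0 + MvPolynomial.X 2 : MvPolynomial (Fin 3) R) h
    - aeval (MvPolynomial.X 1 + MvPolynomial.X 0 : MvPolynomial (Fin 3) R) h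
    - aeval (MvPolynomial.X 1 + MvPolynomial.X 2 : MvPolynomial (Fin 3) R) h
    + aeval (MvPolynomial.X 1 : MvPolynomial (Fin 3) R) h

namespace secondDifference

variable {R : Type*} [CommRing R]

theorem aeval_eq {A : Type*} [CommRing A] [Algebra R A] (h : R[X]) (z : Fin 3 → A) :
    MvPolynomial.aeval z (secondDifference h) =
      aeval (z 1 + z 0 + z 2) h - aeval (z 1 + z 0) h - aeval (z 1 + z 2) h + aeval (z 1) h := by
  simp only [secondDifference, map_add, map_sub, ← aeval_algHom_apply, MvPolynomial.aeval_X]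

theorem X_zero_dvd (h : R[X]) : MvPolynomial.X 0 ∣ secondDifference h := by
  have hYZ := sub_dvd_aeval_sub h
    (MvPolynomial.X 1 + MvPolynomial.X 0 + MvPolynomial.X 2 : MvPolynomial (Fin 3) R)
    (MvPolynomial.X 1 + MvPolynomial.X 2)
  have hY := sub_dvd_aeval_sub h
    (MvPolynomial.X 1 + MvPolynomial.X 0 : MvPolynomial (Fin 3) R) (MvPolynomial.X 1)
  rw [add_right_comm, add_sub_cancel_left] at hYZ
  rw [add_sub_cancel_left] at hY
  convert dvd_sub hYZ hY using 1
  rw [secondDifference, add_right_comm (MvPolynomial.X 1)]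
  ring

theorem X_two_dvd (h : R[X]) : MvPolynomial.X 2 ∣ secondDifference h := by
  have hXY := sub_dvd_aeval_sub h
    (MvPolynomial.X 1 + MvPolynomial.X 0 + MvPolynomial.X 2 : MvPolynomial (Fin 3) R)
    (MvPolynomial.X 1 + MvPolynomial.X 0)
  have hY := sub_dvd_aeval_sub h
    (MvPolynomial.X 1 + MvPolynomial.X 2 : MvPolynomial (Fin 3) R) (MvPolynomial.X 1)
  rw [add_sub_cancel_left] at hXY hY
  convert dvd_sub hXY hY using 1
  rw [secondDifference]
  ring

theorem X_mul_X_dvd [IsDomain R] (h : R[X]) :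
    MvPolynomial.X 0 * MvPolynomial.X 2 ∣ secondDifference h := by
  obtain ⟨g, hg⟩ := X_zero_dvd h
  have hdvd := X_two_dvd h
  rw [hg] at hdvd ⊢
  refine mul_dvd_mul_left _ ((MvPolynomial.X_prime.dvd_or_dvd hdvd).resolve_left ?_)
  simp [MvPolynomial.X_dvd_X]

theorem totalDegree_le (h : R[X]) : (secondDifference h).totalDegree ≤ h.natDegree := by
  have hX (i : Fin 3) : (MvPolynomial.X i : MvPolynomial (Fin 3) R).totalDegree ≤ 1 :=
    MvPolynomial.totalDegree_monomial_le _ _ |>.trans (by simp)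
  have hadd {a b : MvPolynomial (Fin 3) R} {n : ℕ} (ha : a.totalDegree ≤ n)
      (hb : b.totalDegree ≤ n) : (a + b).totalDegree ≤ n :=
    (MvPolynomial.totalDegree_add a b).trans (max_le ha hb)
  have hsub {a b : MvPolynomial (Fin 3) R} {n : ℕ} (ha : a.totalDegree ≤ n)
      (hb : b.totalDegree ≤ n) : (a - b).totalDegree ≤ n :=
    (MvPolynomial.totalDegree_sub a b).trans (max_le ha hb)
  exact hadd
    (hsub
      (hsub (totalDegree_aeval_le h (hadd (hadd (hX 1) (hX 0)) (hX 2)))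
        (totalDegree_aeval_le h (hadd (hX 1) (hX 0))))
      (totalDegree_aeval_le h (hadd (hX 1) (hX 2))))
    (totalDegree_aeval_le h (hX 1))

theorem pderiv_pderiv (h : R[X]) :
    MvPolynomial.pderiv 0 (MvPolynomial.pderiv 2 (secondDifference h)) =
      aeval (MvPolynomial.X 1 + MvPolynomial.X 0 + MvPolynomial.X 2 : MvPolynomial (Fin 3) R)
        (derivative (derivative h)) := by
  simp [secondDifference, Derivation.map_aeval, MvPolynomial.pderiv_X]

theorem aeval_quotient {h : R[X]} {H : MvPolynomial (Fin 3) R}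
    (hH : secondDifference h = MvPolynomial.X 0 * MvPolynomial.X 2 * H) :
    MvPolynomial.aeval ![(0 : R[X]), X, 0] H = derivative (derivative h) := by
  have hderiv := congrArg (MvPolynomial.aeval ![(0 : R[X]), X, 0]) (pderiv_pderiv h)
  rw [hH, ← aeval_algHom_apply] at hderiv
  simpa [Derivation.leibniz, MvPolynomial.pderiv_X] using hderiv

theorem coeff_quotient {h : R[X]} {H : MvPolynomial (Fin 3) R}
    (hH : secondDifference h = MvPolynomial.X 0 * MvPolynomial.X 2 * H) (m : ℕ) :
    MvPolynomial.coeff (Finsupp.single 1 m) H = h.coeff (m + 2) * (m + 2) * (m + 1) := by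
  rw [← coeff_aeval_X_one, aeval_quotient hH, coeff_derivative, coeff_derivative]
  push_cast
  ring

theorem totalDegree_quotient_le [IsDomain R] {h : R[X]} {H : MvPolynomial (Fin 3) R}
    (hH : secondDifference h = MvPolynomial.X 0 * MvPolynomial.X 2 * H) :
    H.totalDegree ≤ h.natDegree - 2 := by
  rcases eq_or_ne H 0 with rfl | hH₀
  · simp
  have hX (i : Fin 3) : (MvPolynomial.X i : MvPolynomial (Fin 3) R) ≠ 0 := MvPolynomial.X_ne_zero i
  have hle := totalDegree_le h
  rw [hH, MvPolynomial.totalDegree_mul_of_isDomain (mul_ne_zero (hX 0) (hX 2)) hH₀,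
    MvPolynomial.totalDegree_mul_of_isDomain (hX 0) (hX 2), MvPolynomial.totalDegree_X,
    MvPolynomial.totalDegree_X] at hle
  omega

theorem coeff_quotient_ne_zero [IsDomain R] {h : R[X]} {H : MvPolynomial (Fin 3) R}
    (hH : secondDifference h = MvPolynomial.X 0 * MvPolynomial.X 2 * H)
    (he₀ : (h.natDegree : R) ≠ 0) (he₁ : (h.natDegree : R) ≠ 1) :
    MvPolynomial.coeff (Finsupp.single 1 (h.natDegree - 2)) H ≠ 0 := by
  have htwo := two_le_of_cast_ne_zero_of_cast_ne_one he₀ he₁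
  obtain ⟨d, hd⟩ := Nat.exists_eq_add_of_le' htwo
  have hlead : h.coeff (d + 2) ≠ 0 := by
    rw [← hd]
    exact leadingCoeff_ne_zero.2 (ne_zero_of_natDegree_gt htwo)
  rw [hd, Nat.add_sub_cancel, coeff_quotient hH]
  rw [hd] at he₀ he₁
  push_cast at he₀ he₁
  exact mul_ne_zero (mul_ne_zero hlead he₀) fun h₀ => he₁ (by linear_combination h₀)

end secondDifference

end SecondDifference

section Planar

theorem second_difference_pow_char_pow_add_one {R : Type*} [CommRing R] (p k : ℕ) [Fact p.Prime]
    [CharP R p] (x y z : R) :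
    (y + x + z) ^ (p ^ k + 1) - (y + x) ^ (p ^ k + 1) - (y + z) ^ (p ^ k + 1) + y ^ (p ^ k + 1) =
      x ^ p ^ k * z + x * z ^ p ^ k := by
  simp only [pow_succ _ (p ^ k), add_pow_char_pow]
  ring

variable {K : Type} [Field K] {p k M : ℕ} [Fact p.Prime] [CharP K p] {h : K[X]}

theorem not_isPlanarOdd_of_aeval_eq_zero {L : Type} [Field L] [Algebra K L] (hM : p ^ k = M + 1)
    {H : MvPolynomial (Fin 3) K}
    (hH : secondDifference h = MvPolynomial.X 0 * MvPolynomial.X 2 * H) {z : Fin 3 → L}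
    (hz : MvPolynomial.aeval z (MvPolynomial.X 0 ^ M + MvPolynomial.X 2 ^ M + H) = 0)
    (hz₀ : z 0 ≠ 0) (hz₂ : z 2 ≠ 0) :
    ¬ IsPlanarOdd fun x : L => aeval x (X ^ (p ^ k + 1) + h) := by
  intro hplanar
  have : CharP L p := charP_of_injective_algebraMap (algebraMap K L).injective p
  have hfrob := second_difference_pow_char_pow_add_one p k (z 0) (z 1) (z 2)
  have hsec := secondDifference.aeval_eq h z
  rw [hH] at hsec
  simp only [map_add, map_mul, map_pow, MvPolynomial.aeval_X] at hz hsec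
  refine hz₀ (add_eq_left.1 ((hplanar (z 2) hz₂).injective (a₁ := z 1 + z 0) (a₂ := z 1) ?_))
  simp only [map_add, map_pow, aeval_X]
  rw [hM] at hfrob ⊢
  linear_combination hfrob - hsec + z 0 * z 2 * hz

theorem exists_forall_not_isPlanarOdd [Fintype K] (hk : k ≠ 0) (hdeg : h.natDegree ≤ p ^ k)
    (he₀ : (h.natDegree : K) ≠ 0) (he₁ : (h.natDegree : K) ≠ 1) :
    ∃ r₀, ∀ r ≥ r₀, ∀ (L : Type) [Field L] [Fintype L] [Algebra K L],
      Fintype.card L = Fintype.card K ^ r →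
        ¬ IsPlanarOdd fun x : L => aeval x (X ^ (p ^ k + 1) + h) := by
  obtain ⟨M, hM⟩ := Nat.exists_eq_succ_of_ne_zero (pow_ne_zero k (Fact.out : p.Prime).ne_zero)
  obtain ⟨H, hH⟩ := secondDifference.X_mul_X_dvd h
  have hpow : ((p ^ k : ℕ) : K) = 0 := (CharP.cast_eq_zero_iff K p _).2 (dvd_pow_self p hk)
  have hMK : (M : K) ≠ 0 := fun h₀ => by simp [hM, h₀] at hpow
  have htwo := two_le_of_cast_ne_zero_of_cast_ne_one he₀ he₁
  have hne : h.natDegree ≠ p ^ k := fun heq => he₀ (heq ▸ hpow)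
  have hHdeg := secondDifference.totalDegree_quotient_le hH
  have hlt : h.natDegree - 2 < M := by omega
  have hprime := prime_map_X_pow_add_X_pow_add (K := AlgebraicClosure K) hMK hHdeg hlt
    (secondDifference.coeff_quotient_ne_zero hH he₀ he₁)
  obtain ⟨r₀, hr₀⟩ := exists_zero_of_absolutelyIrreducible hprime
    (monic_finSuccEquiv_map_X_pow_add (hHdeg.trans_lt hlt))
    (not_X_pow_add_dvd_X_mul_X (hHdeg.trans_lt hlt) (by omega))
  refine ⟨r₀, fun r hr L _ _ _ hL => ?_⟩
  obtain ⟨z, hz, hz₀₂⟩ := hr₀ r hr L hL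
  rw [map_mul, MvPolynomial.aeval_X, MvPolynomial.aeval_X, mul_ne_zero_iff] at hz₀₂
  exact not_isPlanarOdd_of_aeval_eq_zero hM hH hz hz₀₂.1 hz₀₂.2

end Planar

theorem exceptional_planar_pow_add_one_plus_h
    (p n k : ℕ) (hp : p.Prime) (hodd : Odd p) (hn : 0 < n) (hk : 0 < k)
    (K : Type) [Field K] [Fintype K] (hK : Fintype.card K = p ^ n)
    (f h : K[X]) (hf : f = X ^ (p ^ k + 1) + h) (he : h.natDegree < p ^ k + 1)
    (hexc : IsExceptionalPlanarOdd f) :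
    (p : ℤ) ∣ (h.natDegree : ℤ) ∨ (p : ℤ) ∣ (h.natDegree : ℤ) - 1 := by
  have : Fact p.Prime := ⟨hp⟩
  have : CharP K p := charP_of_card_eq_prime_pow hK
  rw [← CharP.intCast_eq_zero_iff K p, ← CharP.intCast_eq_zero_iff K p]
  push_cast
  rw [sub_eq_zero]
  by_contra! hcon
  obtain ⟨r₀, hr₀⟩ := exists_forall_not_isPlanarOdd hk.ne' (Nat.lt_succ_iff.1 he) hcon.1 hcon.2
  obtain ⟨r, ⟨hr, hplanar⟩, hlt⟩ := Set.Infinite.exists_gt hexc r₀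
  have : NeZero r := ⟨hr.ne'⟩
  let := Fintype.ofFinite (FiniteField.Extension K p r)
  have hcard : Fintype.card (FiniteField.Extension K p r) = Fintype.card K ^ r := by
    simpa only [Nat.card_eq_fintype_card] using FiniteField.natCard_extension K p r
  subst hf
  exact hr₀ r hlt.le _ hcard (hplanar _ hcard)
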